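/- arXiv:1901.00327 — 2 statements merged into one kernel-verified Lean document; each statement's English description precedes it below -/
import Mathlib

section
/- Let X be a compact metric space and T : X → X a continuous surjection that is not assumed injective. For every T-ergodic Borel probability measure μ on X with h_μ(X,T) > 0, the set of points x ∈ X that belong to a proper asymptotic pair has μ-measure 1. -/
open MeasureTheory Filter Topology Set
open scoped symmDiff Classical ENNReal NNReal

section Defs

variable {X : Type*}

/-- The pair `(x, y)` is (positively) asymptotic for `T`. -/
def IsAsymptoticPair [PseudoMetricSpace X] (T : X → X) (x y : X) : Prop :=
  Tendsto (fun n : ℕ => dist (T^[n] x) (T^[n] y)) atTop (𝓝 0)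

/-- Shannon entropy of the finite measurable partition of `X` given by the fibers of a
map `p` into a finite type. -/
noncomputable def partEntropy [MeasurableSpace X] (μ : Measure X) {ι : Type*} [Fintype ι]
    (p : X → ι) : ℝ :=
  ∑ i : ι, Real.negMulLog (μ (p ⁻¹' {i})).toReal

/-- Conditional Shannon entropy `H(P | F)` of the finite partition given by the fibers
of `p` with respect to the sub-σ-algebra `F`:
`H(P|F) = ∑_{A ∈ P} ∫ -E(1_A|F) log E(1_A|F) dμ`. -/
noncomputable def condPartEntropy [MeasurableSpace X] (μ : Measure X)
    (F : MeasurableSpace X) {ι : Type*} [Fintype ι] (p : X → ι) : ℝ :=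
  ∑ i : ι, ∫ x, Real.negMulLog ((μ[(p ⁻¹' {i}).indicator (fun _ => (1 : ℝ)) | F]) x) ∂μ

/-- The σ-algebra `σ(P^-)` generated by the partitions `T^{-n}P`, `n ≥ 1`
(the "past" of the partition given by the fibers of `p`). -/
def partPast (T : X → X) {ι : Type*} (p : X → ι) : MeasurableSpace X :=
  ⨆ n : ℕ, MeasurableSpace.comap (fun x => p (T^[n + 1] x)) ⊤

/-- The σ-algebra `σ(P^T)` generated by the partitions `T^{-n}P`, `n ∈ ℤ`, where `S = T⁻¹`. -/
def partHull (T S : X → X) {ι : Type*} (p : X → ι) : MeasurableSpace X :=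
  ⨆ n : ℕ,
    MeasurableSpace.comap (fun x => p (T^[n] x)) ⊤ ⊔
      MeasurableSpace.comap (fun x => p (S^[n] x)) ⊤

/-- Kolmogorov–Sinai entropy of a finite partition: `h_μ(P, T) = H(P | P^-)`. -/
noncomputable def partKS [MeasurableSpace X] (μ : Measure X) (T : X → X) {ι : Type*}
    [Fintype ι] (p : X → ι) : ℝ :=
  condPartEntropy μ (partPast T p) p

/-- Kolmogorov–Sinai (measure-theoretic) entropy `h_μ(X, T)` of the system:
the supremum over all finite measurable partitions `P` of `h_μ(P, T)`. -/
noncomputable def ksEntropy [MeasurableSpace X] (μ : Measure X) (T : X → X) : ℝ≥0∞ :=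
  ⨆ (k : ℕ) (p : X → Fin k) (_ : Measurable p), ENNReal.ofReal (partKS μ T p)

/-- The Pinsker σ-algebra `Π_μ`: the σ-algebra generated by all finite measurable
partitions with zero Kolmogorov–Sinai entropy. -/
def pinskerAlg [MeasurableSpace X] (μ : Measure X) (T : X → X) : MeasurableSpace X :=
  ⨆ (k : ℕ) (p : X → Fin k) (_ : Measurable p) (_ : partKS μ T p = 0),
    MeasurableSpace.comap p ⊤

/-- Minimal cardinality of a subcover of `⋁_{i=0}^{n-1} T^{-i} C`, where `C` is a
finite cover of `X`. -/
noncomputable def coverNum (T : X → X) {k : ℕ} (C : Fin k → Set X) (n : ℕ) : ℕ :=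
  sInf {m : ℕ | ∃ f : Fin m → Fin n → Fin k,
    (⋃ j : Fin m, ⋂ i : Fin n, T^[(i : ℕ)] ⁻¹' C (f j i)) = Set.univ}

/-- Topological entropy of a finite cover `C`:
`h(C, T) = inf_n (1/n) log N(⋁_{i=0}^{n-1} T^{-i} C) = lim_n (1/n) log N(...)`. -/
noncomputable def coverEntropyOf (T : X → X) {k : ℕ} (C : Fin k → Set X) : ℝ :=
  ⨅ n : ℕ, Real.log (coverNum T C (n + 1)) / (n + 1)

/-- `(x, y)` is a topological entropy pair: `x ≠ y` and every two-set open cover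
`{Uᶜ, Vᶜ}`, where `U` and `V` are disjoint closed neighbourhoods of `x` and `y`,
has positive topological entropy. -/
def IsEntropyPair [TopologicalSpace X] (T : X → X) (x y : X) : Prop :=
  x ≠ y ∧ ∀ U V : Set X, IsClosed U → IsClosed V → U ∈ 𝓝 x → V ∈ 𝓝 y → Disjoint U V →
    0 < coverEntropyOf T ![Uᶜ, Vᶜ]

/-- `(x, y)` is an entropy pair for the invariant measure `μ`: `x ≠ y` and every two-set
Borel partition `(A, Aᶜ)` with `x ∈ interior A` and `y ∈ interior Aᶜ` has positive
entropy with respect to `T` and `μ`. -/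
def IsMuEntropyPair [TopologicalSpace X] [MeasurableSpace X] (T : X → X) (μ : Measure X)
    (x y : X) : Prop :=
  x ≠ y ∧ ∀ A : Set X, MeasurableSet A → x ∈ interior A → y ∈ interior Aᶜ →
    0 < partKS μ T (fun z => if z ∈ A then (0 : Fin 2) else 1)

/-- `ν` is the relatively independent square `μ ⊠_G μ` of `μ` over the sub-σ-algebra `G`:
it is determined by `ν(A × B) = ∫ E(1_A|G) · E(1_B|G) dμ` for all Borel sets `A`, `B`. -/
def IsCondSquare (G : MeasurableSpace X) [m0 : MeasurableSpace X] (μ : Measure X)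
    (ν : Measure (X × X)) : Prop :=
  ∀ A B : Set X, MeasurableSet[m0] A → MeasurableSet[m0] B →
    ν (A ×ˢ B) = ENNReal.ofReal
      (∫ x, (μ[A.indicator (fun _ => (1 : ℝ)) | G]) x *
            (μ[B.indicator (fun _ => (1 : ℝ)) | G]) x ∂μ)

/-- The σ-algebra `m₁` is contained in `m₂` modulo `μ`-null sets. -/
def SubModNull [MeasurableSpace X] (μ : Measure X) (m₁ m₂ : MeasurableSpace X) : Prop :=
  ∀ A : Set X, MeasurableSet[m₁] A → ∃ B : Set X, MeasurableSet[m₂] B ∧ μ (A ∆ B) = 0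

end Defs

section Defs2

variable {X : Type*}

/-- The σ-algebra `F^- = ⋁_{n ≥ 1} T^{-n} F`. -/
def pastAlg (T : X → X) (F : MeasurableSpace X) : MeasurableSpace X :=
  ⨆ n : ℕ, MeasurableSpace.comap (T^[n + 1]) F

/-- The σ-algebra `F^T = ⋁_{n ∈ ℤ} T^{-n} F`, where `S = T⁻¹`. -/
def hullAlg (T S : X → X) (F : MeasurableSpace X) : MeasurableSpace X :=
  ⨆ n : ℕ, MeasurableSpace.comap (T^[n]) F ⊔ MeasurableSpace.comap (S^[n]) F

/-- `P` is (the σ-algebra of) an *excellent* measurable partition for `(X, μ, T)` (here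
`S = T⁻¹`): it is generating (`σ(P^T) = 𝒜` mod `μ`) and it is generated by an increasing
sequence of finite measurable partitions `Pₙ ↑ P` with `H(Pₙ|Pₙ⁻) − H(Pₙ|P⁻) → 0`. -/
def IsExcellentPartition (P : MeasurableSpace X) [m0 : MeasurableSpace X] (μ : Measure X)
    (T S : X → X) : Prop :=
  P ≤ m0 ∧ SubModNull μ m0 (hullAlg T S P) ∧
  ∃ (m : ℕ → ℕ) (Q : ∀ n : ℕ, X → Fin (m n)),
    (∀ n, Measurable (Q n)) ∧
    Monotone (fun n => MeasurableSpace.comap (Q n) (⊤ : MeasurableSpace (Fin (m n)))) ∧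
    (⨆ n : ℕ, MeasurableSpace.comap (Q n) (⊤ : MeasurableSpace (Fin (m n)))) = P ∧
    Tendsto (fun n => condPartEntropy μ (partPast T (Q n)) (Q n) -
      condPartEntropy μ (pastAlg T P) (Q n)) atTop (𝓝 0)

end Defs2

/-!
Let `p` be a finite partition of positive entropy and let `ℬ 0, ℬ 1, …` be finite partitions with
mesh tending to `0`. Join the shifted partitions `T^{-m n} ℬ n` to `p` one after the other.
Comparing the entropies of long itineraries through a partition and through its refinement shows
that, for `m n` large, the `n`-th join lowers the entropy of `p` given the past as little as we
like. So the `m n` can be chosen such that `p` keeps positive entropy given the join `F` of the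
tails `⋁_{j ≥ m n} T^{-j} ℬ n`, while points which `F` does not separate are asymptotic.

If the points in proper asymptotic pairs did not fill the space up to a null set, then by
ergodicity the forward orbits of the other points would fill it. No two distinct points of these
orbits are asymptotic, so `F` separates them; by the Lusin–Souslin theorem `F` would contain every
measurable set modulo null sets, and `p` would have zero entropy given `F`.
-/

section PartitionAlgebra

variable {X Y ι κ : Type*}

/-- The σ-algebra of the partition of `X` into the fibres of `p`. For maps with countably many
values, `partAlg p ≤ m` says that `p` is `m`-measurable, and `partAlg q ≤ partAlg p` that the
partition of `q` is coarser than the one of `p`. -/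
abbrev partAlg (p : X → ι) : MeasurableSpace X := MeasurableSpace.comap p ⊤

lemma measurableSet_partAlg (p : X → ι) (s : Set ι) : MeasurableSet[partAlg p] (p ⁻¹' s) :=
  ⟨s, trivial, rfl⟩

lemma partAlg_comp (p : Y → ι) (f : X → Y) : partAlg (p ∘ f) = (partAlg p).comap f :=
  MeasurableSpace.comap_comp.symm

lemma partAlg_comp_le (f : ι → κ) (p : X → ι) : partAlg (f ∘ p) ≤ partAlg p := by
  rw [partAlg_comp]
  exact MeasurableSpace.comap_mono le_top

lemma partAlg_equiv (e : ι ≃ κ) (p : X → ι) : partAlg (e ∘ p) = partAlg p := by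
  refine le_antisymm (partAlg_comp_le e p) ?_
  simpa only [← Function.comp_assoc, e.symm_comp_self, Function.id_comp] using
    partAlg_comp_le e.symm (e ∘ p)

lemma partAlg_prod [Countable ι] [Countable κ] (p : X → ι) (q : X → κ) :
    partAlg (fun x => (p x, q x)) = partAlg p ⊔ partAlg q := by
  let _ : MeasurableSpace ι := ⊤
  let _ : MeasurableSpace κ := ⊤
  have htop : (⊤ : MeasurableSpace (ι × κ)) = Prod.instMeasurableSpace :=
    (eq_top_iff.2 fun s _ => MeasurableSet.of_discrete).symm
  rw [partAlg, htop]
  exact MeasurableSpace.comap_prodMk p q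

lemma partAlg_pi {α : Type*} [Finite α] [Countable ι] (p : α → X → ι) :
    partAlg (fun x a => p a x) = ⨆ a, partAlg (p a) := by
  let _ : MeasurableSpace ι := ⊤
  have htop : (⊤ : MeasurableSpace (α → ι)) = MeasurableSpace.pi :=
    (eq_top_iff.2 fun s _ => MeasurableSet.of_discrete).symm
  rw [partAlg, htop]
  exact MeasurableSpace.comap_process_pi p

lemma exists_measurableSet_inter_fibre_eq {F : MeasurableSpace X} {q : X → κ} {s : Set X}
    (hs : MeasurableSet[F ⊔ partAlg q] s) (j : κ) :
    ∃ t, MeasurableSet[F] t ∧ s ∩ q ⁻¹' {j} = t ∩ q ⁻¹' {j} := by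
  have htrace : (F ⊔ partAlg q).comap ((↑) : q ⁻¹' {j} → X) = F.comap (↑) := by
    have hconst : q ∘ ((↑) : q ⁻¹' {j} → X) = fun _ => j := funext fun x => x.2
    rw [MeasurableSpace.comap_sup, MeasurableSpace.comap_comp, hconst,
      MeasurableSpace.comap_const, sup_bot_eq]
  obtain ⟨t, ht, hts⟩ := htrace.le _ ⟨s, hs, rfl⟩
  rw [Subtype.preimage_coe_eq_preimage_coe_iff] at hts
  exact ⟨t, ht, by simpa only [inter_comm] using hts.symm⟩

end PartitionAlgebra

section CondEntropy

open scoped ProbabilityTheory Function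

variable {X Y ι κ : Type*} {F G : MeasurableSpace X} [m0 : MeasurableSpace X]
  {H : MeasurableSpace Y} [mY : MeasurableSpace Y] {μ : Measure X} {ν : Measure Y}

lemma negMulLog_mem_Icc {t : ℝ} (ht : t ∈ Icc (0 : ℝ) 1) : Real.negMulLog t ∈ Icc (0 : ℝ) 1 :=
  ⟨Real.negMulLog_nonneg ht.1 ht.2,
    (Real.negMulLog_le_one_sub_self ht.1).trans (sub_le_self 1 ht.1)⟩

variable (F) in
lemma condProb_nonneg (A : Set X) : ∀ᵐ x ∂μ, 0 ≤ (μ⟦A | F⟧) x :=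
  condExp_nonneg (Eventually.of_forall (indicator_nonneg fun _ _ => zero_le_one))

variable (F) in
lemma condProb_mono [IsFiniteMeasure μ] {A B : Set X} (hA : MeasurableSet A)
    (hB : MeasurableSet B) (hAB : A ⊆ B) : μ⟦A | F⟧ ≤ᵐ[μ] μ⟦B | F⟧ :=
  condExp_mono ((integrable_const 1).indicator hA) ((integrable_const 1).indicator hB)
    (Eventually.of_forall (indicator_le_indicator_of_subset hAB fun _ => zero_le_one))

lemma condProb_mem_Icc [IsFiniteMeasure μ] (hF : F ≤ m0) {A : Set X} (hA : MeasurableSet A) :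
    ∀ᵐ x ∂μ, (μ⟦A | F⟧) x ∈ Icc (0 : ℝ) 1 := by
  have hle := condProb_mono (μ := μ) F hA MeasurableSet.univ (subset_univ A)
  rw [indicator_univ, condExp_const hF] at hle
  filter_upwards [condProb_nonneg F A, hle] with x h₀ h₁ using ⟨h₀, h₁⟩

lemma integrable_negMulLog_condProb [IsFiniteMeasure μ] (hF : F ≤ m0) {A : Set X}
    (hA : MeasurableSet A) : Integrable (fun x => Real.negMulLog ((μ⟦A | F⟧) x)) μ := by
  refine Integrable.of_mem_Icc 0 1 (Real.continuous_negMulLog.measurable.comp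
    (stronglyMeasurable_condExp.mono hF).measurable).aemeasurable ?_
  filter_upwards [condProb_mem_Icc hF hA] with x hx using negMulLog_mem_Icc hx

variable (F) in
lemma condProb_iUnion [IsFiniteMeasure μ] [Fintype ι] {A : ι → Set X}
    (hA : ∀ i, MeasurableSet (A i)) (hd : Pairwise (Disjoint on A)) :
    μ⟦⋃ i, A i | F⟧ =ᵐ[μ] fun x => ∑ i, (μ⟦A i | F⟧) x := by
  have hsum : (⋃ i, A i).indicator (fun _ => (1 : ℝ)) = ∑ i, (A i).indicator fun _ => 1 := by
    ext x
    rw [← biUnion_univ, ← Finset.coe_univ, Finset.sum_apply]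
    exact congrFun (Finset.indicator_biUnion _ _ fun i _ j _ hij => hd hij) x
  rw [hsum]
  filter_upwards [condExp_finsetSum (s := Finset.univ)
    (fun i _ => (integrable_const (1 : ℝ)).indicator (hA i)) F] with x hx
  rw [hx, Finset.sum_apply]

lemma condExp_comp_ae_eq [IsFiniteMeasure μ] [IsFiniteMeasure ν]
    (hH : H ≤ mY) {f : X → Y} (hf : MeasurePreserving f μ ν) {g : Y → ℝ} (hg : Integrable g ν) :
    (ν[g | H]) ∘ f =ᵐ[μ] μ[g ∘ f | H.comap f] := by
  have hHf : H.comap f ≤ m0 := MeasurableSpace.comap_le_iff_le_map.2 (hH.trans hf.measurable.le_map)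
  refine ae_eq_condExp_of_forall_setIntegral_eq hHf (hf.integrable_comp_of_integrable hg)
    (fun s _ _ => (hf.integrable_comp_of_integrable integrable_condExp).integrableOn) ?_
    (stronglyMeasurable_condExp.comp_measurable
      (comap_measurable f)).aestronglyMeasurable
  rintro _ ⟨s, hs, rfl⟩ -
  have hmap : ∀ u : Y → ℝ, Integrable u ν → ∫ x in f ⁻¹' s, (u ∘ f) x ∂μ = ∫ y in s, u y ∂ν := by
    intro u hu
    have hu' : AEStronglyMeasurable u (μ.map f) := hf.map_eq.symm ▸ hu.aestronglyMeasurable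
    rw [← hf.map_eq, setIntegral_map (hH s hs) hu' hf.aemeasurable]
    rfl
  rw [hmap _ integrable_condExp, hmap g hg, setIntegral_condExp hH hg hs]

variable [Fintype ι]

lemma condPartEntropy_antitone [IsFiniteMeasure μ] (hFG : F ≤ G) (hG : G ≤ m0) {p : X → ι}
    (hp : partAlg p ≤ m0) : condPartEntropy μ G p ≤ condPartEntropy μ F p := by
  refine Finset.sum_le_sum fun i _ => ?_
  have hF := hFG.trans hG
  have hA : MeasurableSet (p ⁻¹' {i}) := hp _ (measurableSet_partAlg p {i})
  have hJensen := Real.concaveOn_negMulLog.condExp_map_le hF (f := μ⟦p ⁻¹' {i} | G⟧)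
    (Real.continuous_negMulLog.upperSemicontinuous.upperSemicontinuousOn _)
    (condProb_nonneg G (p ⁻¹' {i})) isClosed_Ici integrable_condExp
    (integrable_negMulLog_condProb hG hA)
  have htower : μ[μ⟦p ⁻¹' {i} | G⟧ | F] =ᵐ[μ] μ⟦p ⁻¹' {i} | F⟧ := condExp_condExp_of_le hFG hG
  rw [← integral_condExp hF]
  refine integral_mono_ae integrable_condExp (integrable_negMulLog_condProb hF hA) ?_
  filter_upwards [hJensen, htower] with x hx hx'
  rwa [Function.comp_apply, hx'] at hx

lemma tendsto_condPartEntropy_iSup [IsFiniteMeasure μ] {F : ℕ → MeasurableSpace X}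
    (hmono : Monotone F) (hF : ∀ n, F n ≤ m0) {p : X → ι} (hp : partAlg p ≤ m0) :
    Tendsto (fun n => condPartEntropy μ (F n) p) atTop (𝓝 (condPartEntropy μ (⨆ n, F n) p)) := by
  refine tendsto_finsetSum _ fun i _ => ?_
  have hA : MeasurableSet (p ⁻¹' {i}) := hp _ (measurableSet_partAlg p {i})
  refine tendsto_integral_of_dominated_convergence (fun _ => 1)
    (fun n => (integrable_negMulLog_condProb (hF n) hA).aestronglyMeasurable)
    (integrable_const 1) (fun n => ?_) ?_
  · filter_upwards [condProb_mem_Icc (hF n) hA] with x hx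
    rw [Real.norm_of_nonneg (negMulLog_mem_Icc hx).1]
    exact (negMulLog_mem_Icc hx).2
  · filter_upwards [tendsto_ae_condExp (ℱ := ⟨F, hmono, hF⟩)
      ((p ⁻¹' {i}).indicator fun _ => (1 : ℝ))] with x hx
    exact (Real.continuous_negMulLog.tendsto _).comp hx

variable (F μ) in
lemma condPartEntropy_equiv [Fintype κ] (e : ι ≃ κ) (p : X → ι) :
    condPartEntropy μ F (e ∘ p) = condPartEntropy μ F p := by
  refine (Fintype.sum_equiv e _ _ fun i => ?_).symm
  have hfibre : e ∘ p ⁻¹' {e i} = p ⁻¹' {i} := by ext x; simp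
  rw [hfibre]

lemma condPartEntropy_comap [IsFiniteMeasure μ] [IsFiniteMeasure ν] (hH : H ≤ mY) {f : X → Y}
    (hf : MeasurePreserving f μ ν) {p : Y → ι} (hp : partAlg p ≤ mY) :
    condPartEntropy μ (H.comap f) (p ∘ f) = condPartEntropy ν H p := by
  refine Finset.sum_congr rfl fun i _ => ?_
  have hA : MeasurableSet (p ⁻¹' {i}) := hp _ (measurableSet_partAlg p {i})
  have hint := (integrable_negMulLog_condProb (μ := ν) hH hA).aestronglyMeasurable
  rw [← hf.map_eq] at hint
  rw [← hf.map_eq, integral_map hf.aemeasurable hint, hf.map_eq]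
  refine integral_congr_ae ?_
  filter_upwards [condExp_comp_ae_eq hH hf ((integrable_const (1 : ℝ)).indicator hA)] with x hx
  exact congrArg Real.negMulLog hx.symm

lemma condPartEntropy_eq_zero [IsFiniteMeasure μ] (hF : F ≤ m0) {p : X → ι}
    (hp : SubModNull μ (partAlg p) F) : condPartEntropy μ F p = 0 := by
  refine Finset.sum_eq_zero fun i _ => ?_
  obtain ⟨B, hB, hAB⟩ := hp _ (measurableSet_partAlg p {i})
  have hprob : μ⟦p ⁻¹' {i} | F⟧ =ᵐ[μ] B.indicator fun _ => 1 := by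
    rw [← condExp_of_stronglyMeasurable (μ := μ) hF (stronglyMeasurable_const.indicator hB)
      ((integrable_const (1 : ℝ)).indicator (hF B hB))]
    exact condExp_congr_ae (indicator_ae_eq_of_ae_eq_set (measure_symmDiff_eq_zero_iff.1 hAB))
  refine integral_eq_zero_of_ae ?_
  filter_upwards [hprob] with x hx
  rw [hx]
  by_cases hxB : x ∈ B <;> simp [hxB]

end CondEntropy

section ChainRule

open scoped ProbabilityTheory

variable {X ι κ : Type*} {F G : MeasurableSpace X} [m0 : MeasurableSpace X] {μ : Measure X}

lemma sum_negMulLog_eq_negMulLog_sum_add [Fintype ι] {a : ι → ℝ} (ha : ∀ i, 0 ≤ a i) :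
    ∑ i, Real.negMulLog (a i) =
      Real.negMulLog (∑ i, a i) + ∑ i, Real.negMulLog (a i / ∑ j, a j) * ∑ j, a j := by
  rcases eq_or_ne (∑ i, a i) 0 with hb | hb
  · have ha₀ : ∀ i, a i = 0 := fun i =>
      (Finset.sum_eq_zero_iff_of_nonneg fun i _ => ha i).1 hb i (Finset.mem_univ i)
    simp [ha₀]
  set b := ∑ i, a i with hb_def
  have hsplit : ∀ i, Real.negMulLog (a i) =
      a i / b * Real.negMulLog b + Real.negMulLog (a i / b) * b := fun i => by
    rw [mul_comm _ b, ← Real.negMulLog_mul, mul_div_cancel₀ _ hb]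
  rw [Finset.sum_congr rfl fun i _ => hsplit i, Finset.sum_add_distrib, ← Finset.sum_mul,
    ← Finset.sum_div, ← hb_def, div_self hb, one_mul]

lemma setIntegral_inter_eq_setIntegral_mul_condProb [IsFiniteMeasure μ] (hF : F ≤ m0) {f : X → ℝ}
    (hf : StronglyMeasurable[F] f) (hint : Integrable f μ) {t B : Set X}
    (ht : MeasurableSet[F] t) (hB : MeasurableSet B) :
    ∫ x in t ∩ B, f x ∂μ = ∫ x in t, f x * (μ⟦B | F⟧) x ∂μ := by
  have hfB : f * B.indicator (fun _ => 1) = B.indicator f := by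
    ext x; by_cases hx : x ∈ B <;> simp [hx]
  have hintB : Integrable (f * B.indicator fun _ => 1) μ := hfB ▸ hint.indicator hB
  calc ∫ x in t ∩ B, f x ∂μ = ∫ x in t, (f * B.indicator fun _ => (1 : ℝ)) x ∂μ := by
        rw [hfB, setIntegral_indicator hB]
    _ = ∫ x in t, (μ[f * B.indicator (fun _ => 1) | F]) x ∂μ :=
        (setIntegral_condExp hF hintB ht).symm
    _ = ∫ x in t, f x * (μ⟦B | F⟧) x ∂μ := setIntegral_congr_ae (hF t ht) <| by
        filter_upwards [condExp_mul_of_stronglyMeasurable_left hf hintB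
          ((integrable_const 1).indicator hB)] with x hx _ using hx

variable (F) in
lemma condProb_inter_div_mem_Icc [IsFiniteMeasure μ] {A B : Set X} (hA : MeasurableSet A)
    (hB : MeasurableSet B) :
    ∀ᵐ x ∂μ, (μ⟦A ∩ B | F⟧) x / (μ⟦B | F⟧) x ∈ Icc (0 : ℝ) 1 := by
  filter_upwards [condProb_nonneg F (A ∩ B), condProb_nonneg F B,
    condProb_mono F (hA.inter hB) hB inter_subset_right] with x hAB hB hle
  exact ⟨div_nonneg hAB hB, div_le_one_of_le₀ hle hB⟩

lemma stronglyMeasurable_condProb_div (A B : Set X) :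
    StronglyMeasurable[F] fun x => (μ⟦A | F⟧) x / (μ⟦B | F⟧) x :=
  (stronglyMeasurable_condExp.measurable.div
    stronglyMeasurable_condExp.measurable).stronglyMeasurable

variable (F) in
lemma condProb_inter_div_mul [IsFiniteMeasure μ] {A B : Set X} (hA : MeasurableSet A)
    (hB : MeasurableSet B) :
    ∀ᵐ x ∂μ, (μ⟦A ∩ B | F⟧) x / (μ⟦B | F⟧) x * (μ⟦B | F⟧) x = (μ⟦A ∩ B | F⟧) x := by
  filter_upwards [condProb_nonneg F (A ∩ B),
    condProb_mono F (hA.inter hB) hB inter_subset_right] with x hAB hle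
  exact div_mul_cancel_of_imp fun h => le_antisymm (hle.trans_eq h) hAB

lemma indicator_condProb_div_ae_eq [IsFiniteMeasure μ] (hF : F ≤ m0) {q : X → κ}
    (hq : partAlg q ≤ m0) {A : Set X} (hA : MeasurableSet A) (j : κ) :
    (q ⁻¹' {j}).indicator (fun x => (μ⟦A ∩ q ⁻¹' {j} | F⟧) x / (μ⟦q ⁻¹' {j} | F⟧) x) =ᵐ[μ]
      μ⟦A ∩ q ⁻¹' {j} | F ⊔ partAlg q⟧ := by
  set B := q ⁻¹' {j}
  have hBq : MeasurableSet[F ⊔ partAlg q] B :=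
    le_sup_right (a := F) _ (measurableSet_partAlg q {j})
  have hB : MeasurableSet B := sup_le hF hq _ hBq
  have hr := stronglyMeasurable_condProb_div (μ := μ) (F := F) (A ∩ B) B
  have hr_int := Integrable.of_mem_Icc 0 1 (hr.mono hF).measurable.aemeasurable
    (condProb_inter_div_mem_Icc F hA hB)
  have hAB_int : Integrable ((A ∩ B).indicator fun _ => (1 : ℝ)) μ :=
    (integrable_const 1).indicator (hA.inter hB)
  refine ae_eq_condExp_of_forall_setIntegral_eq (sup_le hF hq) hAB_int
    (fun s _ _ => (hr_int.indicator hB).integrableOn) (fun s hs _ => ?_)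
    ((hr.mono le_sup_left).indicator hBq).aestronglyMeasurable
  obtain ⟨t, ht, hst⟩ := exists_measurableSet_inter_fibre_eq hs j
  rw [setIntegral_indicator hB, hst,
    setIntegral_inter_eq_setIntegral_mul_condProb hF hr hr_int ht hB]
  calc ∫ x in t, (μ⟦A ∩ B | F⟧) x / (μ⟦B | F⟧) x * (μ⟦B | F⟧) x ∂μ
      = ∫ x in t, (μ⟦A ∩ B | F⟧) x ∂μ :=
        setIntegral_congr_ae (hF t ht) ((condProb_inter_div_mul F hA hB).mono fun x hx _ => hx)
    _ = ∫ x in t, (A ∩ B).indicator (fun _ => (1 : ℝ)) x ∂μ := setIntegral_condExp hF hAB_int ht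
    _ = ∫ x in s, (A ∩ B).indicator (fun _ => (1 : ℝ)) x ∂μ := by
        rw [setIntegral_indicator (hA.inter hB), setIntegral_indicator (hA.inter hB),
          inter_comm A B, ← inter_assoc, ← inter_assoc, hst]

lemma condProb_sup_partAlg_eq_div [IsFiniteMeasure μ] (hF : F ≤ m0) {q : X → κ}
    (hq : partAlg q ≤ m0) {A : Set X} (hA : MeasurableSet A) (j : κ) :
    ∀ᵐ x ∂μ, q x = j → (μ⟦A | F ⊔ partAlg q⟧) x =
      (μ⟦A ∩ q ⁻¹' {j} | F⟧) x / (μ⟦q ⁻¹' {j} | F⟧) x := by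
  have hB : MeasurableSet[F ⊔ partAlg q] (q ⁻¹' {j}) :=
    le_sup_right (a := F) _ (measurableSet_partAlg q {j})
  have hrestrict := condExp_indicator ((integrable_const (1 : ℝ)).indicator (μ := μ) hA) hB
  rw [indicator_indicator, inter_comm] at hrestrict
  filter_upwards [indicator_condProb_div_ae_eq hF hq hA j, hrestrict] with x hx hx' hxj
  rw [hx', indicator_of_mem (mem_preimage.2 hxj), indicator_of_mem (mem_preimage.2 hxj)] at hx
  exact hx.symm

variable [Fintype κ]

lemma integral_negMulLog_condProb_sup_partAlg [IsFiniteMeasure μ] (hF : F ≤ m0) {q : X → κ}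
    (hq : partAlg q ≤ m0) {A : Set X} (hA : MeasurableSet A) :
    ∫ x, Real.negMulLog ((μ⟦A | F ⊔ partAlg q⟧) x) ∂μ =
      ∑ j, ∫ x, Real.negMulLog ((μ⟦A ∩ q ⁻¹' {j} | F⟧) x / (μ⟦q ⁻¹' {j} | F⟧) x) *
        (μ⟦q ⁻¹' {j} | F⟧) x ∂μ := by
  have hB : ∀ j, MeasurableSet (q ⁻¹' {j}) := fun j => hq _ (measurableSet_partAlg q {j})
  have hcover : ⋃ j, q ⁻¹' {j} = univ := iUnion_eq_univ_iff.2 fun x => ⟨q x, rfl⟩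
  rw [← setIntegral_univ, ← hcover, integral_iUnion_fintype hB
    (fun i j hij => (disjoint_singleton.2 hij).preimage q)
    fun j => (integrable_negMulLog_condProb (sup_le hF hq) hA).integrableOn]
  refine Finset.sum_congr rfl fun j _ => ?_
  have hratio := condProb_inter_div_mem_Icc (μ := μ) F hA (hB j)
  have hsm : StronglyMeasurable[F] fun x =>
      Real.negMulLog ((μ⟦A ∩ q ⁻¹' {j} | F⟧) x / (μ⟦q ⁻¹' {j} | F⟧) x) :=
    Real.continuous_negMulLog.comp_stronglyMeasurable (stronglyMeasurable_condProb_div _ _)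
  have hint := Integrable.of_mem_Icc 0 1 (hsm.mono hF).measurable.aemeasurable
    (hratio.mono fun x => negMulLog_mem_Icc)
  rw [← setIntegral_univ (f := fun x => _ * _),
    ← setIntegral_inter_eq_setIntegral_mul_condProb hF hsm hint MeasurableSet.univ (hB j),
    univ_inter]
  refine setIntegral_congr_ae (hB j) ?_
  filter_upwards [condProb_sup_partAlg_eq_div hF hq hA j] with x hx hxj
  rw [hx hxj]

variable [Fintype ι]

lemma sum_integral_negMulLog_condProb_inter [IsFiniteMeasure μ] (hF : F ≤ m0) {p : X → ι}
    (hp : partAlg p ≤ m0) {B : Set X} (hB : MeasurableSet B) :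
    ∑ i, ∫ x, Real.negMulLog ((μ⟦p ⁻¹' {i} ∩ B | F⟧) x) ∂μ =
      ∫ x, Real.negMulLog ((μ⟦B | F⟧) x) ∂μ +
        ∑ i, ∫ x, Real.negMulLog ((μ⟦p ⁻¹' {i} ∩ B | F⟧) x / (μ⟦B | F⟧) x) *
          (μ⟦B | F⟧) x ∂μ := by
  have hA : ∀ i, MeasurableSet (p ⁻¹' {i}) := fun i => hp _ (measurableSet_partAlg p {i})
  have hcover : ⋃ i, p ⁻¹' {i} ∩ B = B := by
    rw [← iUnion_inter, ← preimage_iUnion, iUnion_of_singleton, preimage_univ, univ_inter]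
  have hsum := condProb_iUnion (μ := μ) F (fun i => (hA i).inter hB) fun i j hij =>
    ((disjoint_singleton.2 hij).preimage p).mono inter_subset_left inter_subset_left
  rw [hcover] at hsum
  have hint : ∀ i, Integrable (fun x =>
      Real.negMulLog ((μ⟦p ⁻¹' {i} ∩ B | F⟧) x / (μ⟦B | F⟧) x) * (μ⟦B | F⟧) x) μ := by
    intro i
    refine Integrable.of_mem_Icc 0 1 (((Real.continuous_negMulLog.comp_stronglyMeasurable
      (stronglyMeasurable_condProb_div _ _)).mul
      stronglyMeasurable_condExp).mono hF).measurable.aemeasurable ?_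
    filter_upwards [condProb_inter_div_mem_Icc F (hA i) hB, condProb_mem_Icc hF hB] with x hr hb
    exact unitInterval.mul_mem (negMulLog_mem_Icc hr) hb
  rw [← integral_finsetSum _ fun i _ => hint i,
    ← integral_finsetSum _ fun i _ => integrable_negMulLog_condProb hF ((hA i).inter hB),
    ← integral_add (integrable_negMulLog_condProb hF hB) (integrable_finsetSum _ fun i _ => hint i)]
  refine integral_congr_ae ?_
  filter_upwards [hsum, ae_all_iff.2 fun i => condProb_nonneg F (p ⁻¹' {i} ∩ B)] with x hx h₀
  simpa only [hx] using sum_negMulLog_eq_negMulLog_sum_add h₀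

theorem condPartEntropy_prod [IsFiniteMeasure μ] (hF : F ≤ m0) {p : X → ι} {q : X → κ}
    (hp : partAlg p ≤ m0) (hq : partAlg q ≤ m0) :
    condPartEntropy μ F (fun x => (p x, q x)) =
      condPartEntropy μ F q + condPartEntropy μ (F ⊔ partAlg q) p := by
  have hfibre : ∀ i j, (fun x => (p x, q x)) ⁻¹' {(i, j)} = p ⁻¹' {i} ∩ q ⁻¹' {j} := by
    intro i j; ext x; simp
  have hcond : condPartEntropy μ (F ⊔ partAlg q) p = _ :=
    (Finset.sum_congr rfl fun i _ => integral_negMulLog_condProb_sup_partAlg hF hq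
      (hp _ (measurableSet_partAlg p {i}))).trans Finset.sum_comm
  rw [hcond, condPartEntropy, condPartEntropy, Fintype.sum_prod_type_right,
    ← Finset.sum_add_distrib]
  simp only [hfibre]
  exact Finset.sum_congr rfl fun j _ =>
    sum_integral_negMulLog_condProb_inter hF hp (hq _ (measurableSet_partAlg q {j}))

lemma condPartEntropy_eq_add_of_le [IsFiniteMeasure μ] (hF : F ≤ m0) {p : X → ι} {q : X → κ}
    (hp : partAlg p ≤ m0) (hqp : partAlg q ≤ partAlg p) :
    condPartEntropy μ F p = condPartEntropy μ F q + condPartEntropy μ (F ⊔ partAlg q) p := by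
  have hq := hqp.trans hp
  have hzero : condPartEntropy μ (F ⊔ partAlg p) q = 0 :=
    condPartEntropy_eq_zero (sup_le hF hp) fun A hA =>
      ⟨A, le_sup_right (a := F) _ (hqp A hA), by simp⟩
  have hswap := condPartEntropy_equiv F μ (Equiv.prodComm ι κ) fun x => (p x, q x)
  have hpq := condPartEntropy_prod (μ := μ) hF hp hq
  have hqp := condPartEntropy_prod (μ := μ) hF hq hp
  rw [hzero, add_zero] at hqp
  rw [← hpq, ← hswap, ← hqp]
  rfl

lemma condPartEntropy_sub_le_sub [IsFiniteMeasure μ] (hFG : F ≤ G) (hG : G ≤ m0) {p : X → ι}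
    {q : X → κ} (hp : partAlg p ≤ m0) (hqp : partAlg q ≤ partAlg p) :
    condPartEntropy μ F q - condPartEntropy μ G q ≤
      condPartEntropy μ F p - condPartEntropy μ G p := by
  rw [condPartEntropy_eq_add_of_le (hFG.trans hG) hp hqp, condPartEntropy_eq_add_of_le hG hp hqp]
  linarith [condPartEntropy_antitone (μ := μ) (sup_le_sup_right hFG (partAlg q))
    (sup_le hG (hqp.trans hp)) hp]

end ChainRule

section Tails

variable {X ι : Type*} {T : X → X} {F G : MeasurableSpace X}

/-- The tail σ-algebra `⋁_{j ≥ n} T^{-j} F`; `pastAlg T F` is `tailAlg T F 1`. -/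
abbrev tailAlg (T : X → X) (F : MeasurableSpace X) (n : ℕ) : MeasurableSpace X :=
  ⨆ j : ℕ, F.comap T^[j + n]

/-- The first `n` terms `⋁_{1 ≤ i ≤ n} T^{-i} F` of the past `pastAlg T F`. -/
abbrev recentPast (T : X → X) (F : MeasurableSpace X) (n : ℕ) : MeasurableSpace X :=
  ⨆ i : Fin n, F.comap T^[(i : ℕ) + 1]

/-- The itinerary of a point through the partition `p` during the times `0, …, n - 1`; it
represents the refined partition `⋁_{i < n} T^{-i} p`. -/
def itinerary (T : X → X) (p : X → ι) (n : ℕ) : X → Fin n → ι :=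
  fun x i => p (T^[i] x)

lemma partPast_eq_pastAlg (T : X → X) (p : X → ι) : partPast T p = pastAlg T (partAlg p) :=
  iSup_congr fun n => partAlg_comp p T^[n + 1]

lemma comap_comap_iterate (m n : ℕ) : (F.comap T^[m]).comap T^[n] = F.comap T^[m + n] := by
  rw [MeasurableSpace.comap_comp, Function.iterate_add]

lemma comap_iterate_le_tailAlg {n j : ℕ} (h : n ≤ j) : F.comap T^[j] ≤ tailAlg T F n := by
  simpa only [Nat.sub_add_cancel h] using le_iSup (fun i => F.comap T^[i + n]) (j - n)

lemma tailAlg_antitone (T : X → X) (F : MeasurableSpace X) : Antitone (tailAlg T F) :=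
  fun _ _ h => iSup_le fun j => comap_iterate_le_tailAlg (h.trans (Nat.le_add_left _ j))

lemma tailAlg_mono (h : F ≤ G) (n : ℕ) : tailAlg T F n ≤ tailAlg T G n :=
  iSup_mono fun _ => MeasurableSpace.comap_mono h

lemma tailAlg_sup (n : ℕ) : tailAlg T (F ⊔ G) n = tailAlg T F n ⊔ tailAlg T G n := by
  simp only [tailAlg, MeasurableSpace.comap_sup, iSup_sup_eq]

lemma comap_iterate_tailAlg (m n : ℕ) :
    (tailAlg T F m).comap T^[n] = tailAlg T F (m + n) := by
  simp only [tailAlg, MeasurableSpace.comap_iSup, comap_comap_iterate, add_assoc]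

lemma tailAlg_comap_iterate (m n : ℕ) :
    tailAlg T (F.comap T^[m]) n = tailAlg T F (m + n) := by
  simp only [tailAlg, comap_comap_iterate, add_left_comm]

lemma recentPast_mono (T : X → X) (F : MeasurableSpace X) : Monotone (recentPast T F) :=
  fun _ _ h => iSup_le fun i =>
    le_iSup (fun j : Fin _ => F.comap T^[(j : ℕ) + 1]) (Fin.castLE h i)

lemma recentPast_le_pastAlg (n : ℕ) : recentPast T F n ≤ pastAlg T F :=
  iSup_le fun i => le_iSup (fun j => F.comap T^[j + 1]) (i : ℕ)

lemma iSup_recentPast : ⨆ n, recentPast T F n = pastAlg T F := by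
  refine le_antisymm (iSup_le recentPast_le_pastAlg) (iSup_le fun j => ?_)
  exact le_iSup_of_le (j + 1)
    (le_iSup (fun i : Fin (j + 1) => F.comap T^[(i : ℕ) + 1]) (Fin.last j))

lemma pastAlg_le_recentPast_sup_tailAlg (n : ℕ) :
    pastAlg T F ≤ recentPast T F n ⊔ tailAlg T F (n + 1) := by
  refine iSup_le fun j => ?_
  rcases lt_or_ge j n with h | h
  · exact le_sup_of_le_left (le_iSup (fun i : Fin n => F.comap T^[(i : ℕ) + 1]) ⟨j, h⟩)
  · exact le_sup_of_le_right (comap_iterate_le_tailAlg (Nat.add_le_add_right h 1))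

lemma partAlg_itinerary [Countable ι] (T : X → X) (p : X → ι) (n : ℕ) :
    partAlg (itinerary T p n) = ⨆ i : Fin n, (partAlg p).comap T^[(i : ℕ)] := by
  simp only [← partAlg_comp]
  exact partAlg_pi fun (i : Fin n) x => p (T^[(i : ℕ)] x)

lemma partAlg_itinerary_comp [Countable ι] (T : X → X) (p : X → ι) (n : ℕ) :
    partAlg (itinerary T p n ∘ T) = recentPast T (partAlg p) n := by
  rw [partAlg_comp, partAlg_itinerary, MeasurableSpace.comap_iSup]
  exact iSup_congr fun i => comap_comap_iterate (T := T) i 1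

lemma itinerary_succ (T : X → X) (p : X → ι) (n : ℕ) :
    itinerary T p (n + 1) =
      (Fin.consEquiv fun _ => ι) ∘ fun x => (p x, (itinerary T p n ∘ T) x) := by
  ext x i
  exact Fin.cases rfl (fun _ => rfl) i

variable [m0 : MeasurableSpace X]

lemma comap_iterate_le (hT : Measurable T) (hF : F ≤ m0) (n : ℕ) : F.comap T^[n] ≤ m0 :=
  MeasurableSpace.comap_le_iff_le_map.2 (hF.trans (hT.iterate n).le_map)

lemma tailAlg_le (hT : Measurable T) (hF : F ≤ m0) (n : ℕ) : tailAlg T F n ≤ m0 :=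
  iSup_le fun j => comap_iterate_le hT hF (j + n)

lemma partAlg_itinerary_le [Countable ι] {p : X → ι} (hT : Measurable T)
    (hp : partAlg p ≤ m0) (n : ℕ) :
    partAlg (itinerary T p n) ≤ m0 := by
  rw [partAlg_itinerary]
  exact iSup_le fun i => comap_iterate_le hT hp i

end Tails

section EntropyOfItineraries

variable {X ι κ : Type*} {T : X → X} {F G : MeasurableSpace X} [m0 : MeasurableSpace X]
  {μ : Measure X} [IsFiniteMeasure μ] [Fintype ι] {p : X → ι} {r : X → κ}

lemma recentPast_le (hT : Measurable T) (hF : F ≤ m0) (n : ℕ) : recentPast T F n ≤ m0 :=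
  (recentPast_le_pastAlg n).trans (tailAlg_le hT hF 1)

lemma condPartEntropy_itinerary_zero (hF : F ≤ m0) :
    condPartEntropy μ F (itinerary T p 0) = 0 := by
  refine condPartEntropy_eq_zero hF fun A hA => ⟨A, ?_, by simp⟩
  rw [partAlg_itinerary, iSup_of_empty] at hA
  exact bot_le (a := F) A hA

lemma condPartEntropy_itinerary (hT : MeasurePreserving T μ μ) (hF : F ≤ m0)
    (hp : partAlg p ≤ m0) (n : ℕ) :
    condPartEntropy μ (F.comap T^[n]) (itinerary T p n) = ∑ i ∈ Finset.range n,
      condPartEntropy μ (recentPast T (partAlg p) i ⊔ F.comap T^[i + 1]) p := by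
  induction n with
  | zero =>
    exact condPartEntropy_itinerary_zero (comap_iterate_le hT.measurable hF 0)
  | succ n ih =>
    have hFn := comap_iterate_le hT.measurable hF n
    have hpn := partAlg_itinerary_le hT.measurable hp n
    have hpnT : partAlg (itinerary T p n ∘ T) ≤ m0 := by
      rw [partAlg_itinerary_comp]
      exact recentPast_le hT.measurable hp n
    rw [itinerary_succ, condPartEntropy_equiv,
      condPartEntropy_prod (comap_iterate_le hT.measurable hF (n + 1)) hp hpnT,
      Finset.sum_range_succ, ← ih, sup_comm (F.comap T^[n + 1]), partAlg_itinerary_comp,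
      ← condPartEntropy_comap hFn hT hpn]
    congr 2
    exact (comap_comap_iterate (T := T) n 1).symm

lemma mul_partKS_le_condPartEntropy_itinerary (hT : MeasurePreserving T μ μ)
    (hF : F ≤ tailAlg T (partAlg p) 0) (hp : partAlg p ≤ m0) (n : ℕ) :
    n * partKS μ T p ≤ condPartEntropy μ (F.comap T^[n]) (itinerary T p n) := by
  have hterm : ∀ i, partKS μ T p ≤
      condPartEntropy μ (recentPast T (partAlg p) i ⊔ F.comap T^[i + 1]) p := by
    intro i
    rw [partKS, partPast_eq_pastAlg]
    refine condPartEntropy_antitone (sup_le (recentPast_le_pastAlg i) ?_)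
      (tailAlg_le hT.measurable hp 1) hp
    refine (MeasurableSpace.comap_mono hF).trans ?_
    rw [comap_iterate_tailAlg, zero_add]
    exact tailAlg_antitone T (partAlg p) (Nat.le_add_left 1 i)
  rw [condPartEntropy_itinerary hT (hF.trans (tailAlg_le hT.measurable hp 0)) hp]
  simpa using Finset.card_nsmul_le_sum (Finset.range n) _ _ fun i _ => hterm i

lemma tendsto_condPartEntropy_recentPast (hT : Measurable T) (hp : partAlg p ≤ m0) :
    Tendsto (fun n => condPartEntropy μ (recentPast T (partAlg p) n) p) atTop
      (𝓝 (partKS μ T p)) := by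
  rw [partKS, partPast_eq_pastAlg, ← iSup_recentPast]
  exact tendsto_condPartEntropy_iSup (recentPast_mono T (partAlg p)) (recentPast_le hT hp) hp

lemma condPartEntropy_tailAlg_itinerary_le_sum (hT : MeasurePreserving T μ μ)
    (hG : G ≤ m0) (hpG : partAlg p ≤ G) (n : ℕ) :
    condPartEntropy μ (tailAlg T G n) (itinerary T p n) ≤ ∑ i ∈ Finset.range n,
      condPartEntropy μ (pastAlg T (partAlg p) ⊔ tailAlg T G (i + 1)) p := by
  have hp := hpG.trans hG
  have htail := tailAlg_le hT.measurable hG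
  have hsum := condPartEntropy_itinerary hT (htail 0) hp n
  simp only [comap_iterate_tailAlg, zero_add] at hsum
  rw [hsum]
  refine Finset.sum_le_sum fun i _ => condPartEntropy_antitone (sup_le ?_ le_sup_right)
    (sup_le (recentPast_le hT.measurable hp i) (htail (i + 1))) hp
  exact (pastAlg_le_recentPast_sup_tailAlg i).trans
    (sup_le_sup_left (tailAlg_mono hpG (i + 1)) _)

lemma mul_partKS_add_le_sum [Fintype κ] (hT : MeasurePreserving T μ μ)
    (hr : partAlg r ≤ m0) (hpr : partAlg p ≤ partAlg r) (n : ℕ) :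
    n * (partKS μ T p + partKS μ T r) ≤ ∑ i ∈ Finset.range n,
      (condPartEntropy μ (pastAlg T (partAlg p) ⊔ tailAlg T (partAlg r) (i + 1)) p +
        condPartEntropy μ (recentPast T (partAlg r) i) r) := by
  have hTm := hT.measurable
  have hp := hpr.trans hr
  have hpn := mul_partKS_le_condPartEntropy_itinerary (F := ⊥) hT bot_le hp n
  have hrn := mul_partKS_le_condPartEntropy_itinerary hT (le_refl _) hr n
  have hloss : condPartEntropy μ ⊥ (itinerary T p n) -
      condPartEntropy μ (tailAlg T (partAlg r) n) (itinerary T p n) ≤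
      condPartEntropy μ ⊥ (itinerary T r n) -
        condPartEntropy μ (tailAlg T (partAlg r) n) (itinerary T r n) := by
    refine condPartEntropy_sub_le_sub bot_le (tailAlg_le hTm hr n)
      (partAlg_itinerary_le hTm hr n) ?_
    rw [partAlg_itinerary, partAlg_itinerary]
    exact iSup_mono fun i => MeasurableSpace.comap_mono hpr
  have hpSum := condPartEntropy_tailAlg_itinerary_le_sum hT hr hpr n
  have hrSum := condPartEntropy_itinerary (μ := μ) (F := ⊥) hT bot_le hr n
  simp only [MeasurableSpace.comap_bot, sup_bot_eq, comap_iterate_tailAlg, zero_add]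
    at hpn hrn hrSum
  rw [Finset.sum_add_distrib, ← hrSum]
  linarith

theorem tendsto_condPartEntropy_pastAlg_sup_tailAlg [Finite κ]
    (hT : MeasurePreserving T μ μ) (hr : partAlg r ≤ m0) (hpr : partAlg p ≤ partAlg r) :
    Tendsto (fun n => condPartEntropy μ
      (pastAlg T (partAlg p) ⊔ tailAlg T (partAlg r) (n + 1)) p) atTop (𝓝 (partKS μ T p)) := by
  have := Fintype.ofFinite κ
  have hTm := hT.measurable
  have hp := hpr.trans hr
  set b : ℕ → ℝ := fun n =>
    condPartEntropy μ (pastAlg T (partAlg p) ⊔ tailAlg T (partAlg r) (n + 1)) p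
  have hle : ∀ n, pastAlg T (partAlg p) ⊔ tailAlg T (partAlg r) (n + 1) ≤ m0 :=
    fun n => sup_le (tailAlg_le hTm hp 1) (tailAlg_le hTm hr _)
  have hmono : Monotone b := fun m n hmn => condPartEntropy_antitone
    (sup_le_sup_left (tailAlg_antitone T _ (Nat.add_le_add_right hmn 1)) _) (hle m) hp
  have hbdd : ∀ n, b n ≤ partKS μ T p := fun n => by
    rw [partKS, partPast_eq_pastAlg]
    exact condPartEntropy_antitone le_sup_left (hle n) hp
  have hlim := tendsto_atTop_ciSup hmono ⟨partKS μ T p, forall_mem_range.2 hbdd⟩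
  have hcesaro := (hlim.add (tendsto_condPartEntropy_recentPast (μ := μ) hTm hr)).cesaro
  have hsum : partKS μ T p + partKS μ T r ≤ (⨆ n, b n) + partKS μ T r := by
    refine ge_of_tendsto hcesaro ((eventually_gt_atTop 0).mono fun n hn => ?_)
    rw [inv_mul_eq_div, le_div_iff₀' (Nat.cast_pos.2 hn)]
    exact mul_partKS_add_le_sum hT hr hpr n
  rwa [le_antisymm (ciSup_le hbdd) (le_of_add_le_add_right hsum)] at hlim

end EntropyOfItineraries

section FinitePartitions

variable {X : Type*} {T : X → X} {𝒜 ℬ : MeasurableSpace X} [m0 : MeasurableSpace X]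

/-- `𝒜` is the σ-algebra of a finite measurable partition. -/
def IsFinitePartAlg (𝒜 : MeasurableSpace X) : Prop :=
  𝒜 ≤ m0 ∧ ∃ (k : ℕ) (P : X → Fin k), partAlg P = 𝒜

lemma isFinitePartAlg_partAlg {ι : Type*} [Finite ι] {p : X → ι} (hp : partAlg p ≤ m0) :
    IsFinitePartAlg (partAlg p) :=
  ⟨hp, Nat.card ι, Finite.equivFin ι ∘ p, partAlg_equiv (Finite.equivFin ι) p⟩

namespace IsFinitePartAlg

lemma comap_iterate (hT : Measurable T) (h𝒜 : IsFinitePartAlg 𝒜) (n : ℕ) :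
    IsFinitePartAlg (𝒜.comap T^[n]) := by
  obtain ⟨hle, k, P, rfl⟩ := h𝒜
  exact ⟨comap_iterate_le hT hle n, k, P ∘ T^[n], partAlg_comp P T^[n]⟩

lemma sup (h𝒜 : IsFinitePartAlg 𝒜) (hℬ : IsFinitePartAlg ℬ) : IsFinitePartAlg (𝒜 ⊔ ℬ) := by
  have hle := sup_le h𝒜.1 hℬ.1
  obtain ⟨-, k, P, rfl⟩ := h𝒜
  obtain ⟨-, l, Q, rfl⟩ := hℬ
  rw [← partAlg_prod] at hle ⊢
  exact isFinitePartAlg_partAlg hle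

end IsFinitePartAlg

variable {ι : Type*} [Fintype ι] {μ : Measure X} [IsFiniteMeasure μ] {p : X → ι} {c : ℝ}

lemma exists_lt_condPartEntropy_pastAlg_sup (hT : MeasurePreserving T μ μ)
    (h𝒜 : IsFinitePartAlg 𝒜) (hℬ : IsFinitePartAlg ℬ) (hp : partAlg p ≤ 𝒜)
    (hc : c < condPartEntropy μ (pastAlg T 𝒜) p) :
    ∃ m, c < condPartEntropy μ (pastAlg T (𝒜 ⊔ ℬ.comap T^[m])) p := by
  have hTm := hT.measurable
  have hsup := h𝒜.sup hℬ
  have hsup_le := hsup.1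
  have hsup_comap := fun m => h𝒜.sup (hℬ.comap_iterate hTm m)
  obtain ⟨h𝒜le, k, P, rfl⟩ := h𝒜
  obtain ⟨-, l, R, hR⟩ := hsup
  have hlim := tendsto_condPartEntropy_pastAlg_sup_tailAlg hT (hR.trans_le hsup_le)
    (le_sup_left.trans hR.ge)
  obtain ⟨m, hm⟩ := (hlim.eventually_const_lt (sub_lt_self _ (sub_pos.2 hc))).exists
  rw [hR, partKS, partPast_eq_pastAlg] at hm
  have hpast : pastAlg T (partAlg P) ≤ pastAlg T (partAlg P ⊔ ℬ.comap T^[m]) :=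
    tailAlg_mono le_sup_left 1
  have hle : pastAlg T (partAlg P ⊔ ℬ.comap T^[m]) ≤
      pastAlg T (partAlg P) ⊔ tailAlg T (partAlg P ⊔ ℬ) (m + 1) := by
    refine (tailAlg_sup 1).trans_le (sup_le_sup_left ?_ _)
    rw [tailAlg_comap_iterate]
    exact tailAlg_mono le_sup_right (m + 1)
  have hP := condPartEntropy_antitone (μ := μ) hle
    (sup_le (tailAlg_le hTm h𝒜le 1) (tailAlg_le hTm hsup_le (m + 1))) h𝒜le
  have hloss := condPartEntropy_sub_le_sub (μ := μ) hpast
    (tailAlg_le hTm (hsup_comap m).1 1) h𝒜le hp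
  exact ⟨m, by linarith⟩

theorem exists_le_condPartEntropy_iSup_tailAlg (hT : MeasurePreserving T μ μ)
    (hp : partAlg p ≤ m0) (hc : c < partKS μ T p) {ℬ : ℕ → MeasurableSpace X}
    (hℬ : ∀ n, IsFinitePartAlg (ℬ n)) :
    ∃ m : ℕ → ℕ, c ≤ condPartEntropy μ (⨆ n, tailAlg T (ℬ n) (m n)) p := by
  have hTm := hT.measurable
  -- Inside the binder, `𝒜` would shadow `m0` as the instance, which is therefore explicit.
  let Good : MeasurableSpace X → Prop := fun 𝒜 =>
    IsFinitePartAlg (m0 := m0) 𝒜 ∧ partAlg p ≤ 𝒜 ∧ c < @condPartEntropy X m0 μ (pastAlg T 𝒜) ι _ p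
  have hstep : ∀ n (𝒜 : Subtype Good), ∃ m, Good (𝒜 ⊔ (ℬ n).comap T^[m]) := by
    intro n 𝒜
    obtain ⟨hfin, hle, hlt⟩ := 𝒜.2
    obtain ⟨m, hm⟩ := exists_lt_condPartEntropy_pastAlg_sup hT hfin (hℬ n) hle hlt
    exact ⟨m, hfin.sup ((hℬ n).comap_iterate hTm m), hle.trans le_sup_left, hm⟩
  choose m hm using hstep
  have hbase : Good (partAlg p) :=
    ⟨isFinitePartAlg_partAlg hp, le_rfl, by rwa [← partPast_eq_pastAlg]⟩
  let 𝒜 : ℕ → Subtype Good := fun n =>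
    Nat.rec ⟨partAlg p, hbase⟩ (fun k ℱ => ⟨ℱ ⊔ (ℬ k).comap T^[m k ℱ], hm k ℱ⟩) n
  have hmono : Monotone fun n => pastAlg T (𝒜 n).1 :=
    monotone_nat_of_le_succ fun n => tailAlg_mono (F := (𝒜 n).1) le_sup_left 1
  have hpast : ∀ n, pastAlg T (𝒜 n).1 ≤ m0 :=
    fun n => tailAlg_le hTm (𝒜 n).2.1.1 1
  have hlim := tendsto_condPartEntropy_iSup (μ := μ) hmono hpast hp
  have htail : ⨆ n, tailAlg T (ℬ n) (m n (𝒜 n) + 1) ≤ ⨆ n, pastAlg T (𝒜 n).1 := by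
    refine iSup_le fun n => le_iSup_of_le (n + 1) ?_
    rw [← tailAlg_comap_iterate]
    exact tailAlg_mono le_sup_right 1
  refine ⟨fun n => m n (𝒜 n) + 1, ?_⟩
  exact (ge_of_tendsto hlim (Eventually.of_forall fun n => (𝒜 n).2.2.2.le)).trans
    (condPartEntropy_antitone htail (iSup_le hpast) hp)

end FinitePartitions

section Separation

lemma measurable_iSup_tailAlg {X : Type*} {κ : ℕ → Type*} [∀ n, MeasurableSpace (κ n)] (T : X → X)
    (q : ∀ n, X → κ n) (m : ℕ → ℕ) :
    Measurable[⨆ n, tailAlg T (partAlg (q n)) (m n)] fun x n j => q n (T^[j + m n] x) := by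
  let _ := ⨆ n, tailAlg T (partAlg (q n)) (m n)
  refine measurable_pi_lambda _ fun n => measurable_pi_lambda _ fun j => ?_
  refine measurable_iff_comap_le.2 ((MeasurableSpace.comap_mono le_top).trans ?_)
  exact (partAlg_comp (q n) T^[j + m n]).trans_le
    ((comap_iterate_le_tailAlg (Nat.le_add_left _ j)).trans
      (le_iSup (fun n => tailAlg T (partAlg (q n)) (m n)) n))

variable {X Z : Type*} {F : MeasurableSpace X} [m0 : MeasurableSpace X] {μ : Measure X}

lemma subModNull_of_injOn [StandardBorelSpace X] [MeasurableSpace Z]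
    [MeasurableSpace.CountablySeparated Z] (hF : F ≤ m0) {φ : X → Z} (hφ : Measurable[F] φ)
    {W : Set X} (hW : MeasurableSet W) (hWμ : W =ᵐ[μ] univ) (hinj : InjOn φ W) :
    SubModNull μ m0 F := by
  intro A hA
  have himage : MeasurableSet (φ '' (A ∩ W)) :=
    (hA.inter hW).image_of_measurable_injOn (hφ.mono hF le_rfl) (hinj.mono inter_subset_right)
  refine ⟨φ ⁻¹' (φ '' (A ∩ W)), hφ himage, measure_symmDiff_eq_zero_iff.2 ?_⟩
  filter_upwards [hWμ] with x hx
  have hxW : x ∈ W := hx.mpr trivial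
  refine propext ⟨fun hxA => ⟨x, ⟨hxA, hxW⟩, rfl⟩, ?_⟩
  rintro ⟨y, ⟨hyA, hyW⟩, hyx⟩
  exact hinj hyW hxW hyx ▸ hyA

end Separation

section AsymptoticPairs

variable {X : Type*} [PseudoMetricSpace X] {T : X → X}

lemma isAsymptoticPair_iterate_iff {x y : X} (n : ℕ) :
    IsAsymptoticPair T (T^[n] x) (T^[n] y) ↔ IsAsymptoticPair T x y := by
  simp only [IsAsymptoticPair, ← Function.iterate_add_apply]
  exact tendsto_add_atTop_iff_nat (f := fun k => dist (T^[k] x) (T^[k] y)) n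

lemma IsAsymptoticPair.refl (x : X) : IsAsymptoticPair T x x := by
  simp only [IsAsymptoticPair, dist_self, tendsto_const_nhds]

lemma IsAsymptoticPair.symm {x y : X} (h : IsAsymptoticPair T x y) : IsAsymptoticPair T y x := by
  simpa only [IsAsymptoticPair, dist_comm] using h

lemma isAsymptoticPair_of_forall_eq {κ : ℕ → Type*} {q : ∀ n, X → κ n} {ε : ℕ → ℝ}
    (hε : Tendsto ε atTop (𝓝 0)) (hq : ∀ n x y, q n x = q n y → dist x y < ε n)
    {m : ℕ → ℕ} {x y : X} (hxy : ∀ n j, q n (T^[j + m n] x) = q n (T^[j + m n] y)) :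
    IsAsymptoticPair T x y := by
  refine Metric.tendsto_atTop.2 fun δ hδ => ?_
  obtain ⟨n, hn⟩ := (hε.eventually_lt_const hδ).exists
  refine ⟨m n, fun k hk => ?_⟩
  rw [Real.dist_0_eq_abs, abs_of_nonneg dist_nonneg, ← Nat.sub_add_cancel hk]
  exact (hq n _ _ (hxy n (k - m n))).trans hn

lemma eq_of_isAsymptoticPair_iterate {E : Set X}
    (hE : ∀ x ∈ E, ∀ y, IsAsymptoticPair T x y → y = x) {a b : X} (ha : a ∈ E) (hb : b ∈ E)
    {n m : ℕ} (h : IsAsymptoticPair T (T^[n] a) (T^[m] b)) : T^[n] a = T^[m] b := by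
  wlog hnm : n ≤ m generalizing a b n m
  · exact (this hb ha h.symm (le_of_not_ge hnm)).symm
  obtain ⟨k, rfl⟩ := Nat.exists_eq_add_of_le hnm
  rw [Function.iterate_add_apply] at h ⊢
  rw [hE a ha _ ((isAsymptoticPair_iterate_iff n).1 h)]

variable [MeasurableSpace X]

lemma exists_fine_partition [OpensMeasurableSpace X] (hX : TotallyBounded (univ : Set X))
    {ε : ℝ} (hε : 0 < ε) :
    ∃ (k : ℕ) (q : X → Fin k → Prop), partAlg q ≤ ‹MeasurableSpace X› ∧
      ∀ x y, q x = q y → dist x y < ε := by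
  obtain ⟨t, ht, hcover⟩ := Metric.totallyBounded_iff.1 hX (ε / 2) (half_pos hε)
  obtain ⟨k, c, -, rfl⟩ := ht.fin_param
  refine ⟨k, fun x i => x ∈ Metric.ball (c i) (ε / 2), ?_, fun x y hxy => ?_⟩
  · rw [partAlg_pi fun (i : Fin k) x => x ∈ Metric.ball (c i) (ε / 2)]
    exact iSup_le fun i => (measurable_mem.2 Metric.isOpen_ball.measurableSet).comap_le
  · obtain ⟨_, ⟨i, rfl⟩, hx⟩ := mem_iUnion₂.1 (hcover (mem_univ x))
    have hy : y ∈ Metric.ball (c i) (ε / 2) := (congrFun hxy i).mp hx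
    linarith [dist_triangle_right x y (c i), Metric.mem_ball.1 hx, Metric.mem_ball.1 hy]

lemma exists_ae_univ_forall_isAsymptoticPair_eq [StandardBorelSpace X] {μ : Measure X}
    [IsProbabilityMeasure μ] (herg : Ergodic T μ)
    (h : μ {x | ∃ y, y ≠ x ∧ IsAsymptoticPair T x y} ≠ 1) :
    ∃ W, MeasurableSet W ∧ W =ᵐ[μ] univ ∧
      ∀ x ∈ W, ∀ y ∈ W, IsAsymptoticPair T x y → x = y := by
  set S := {x | ∃ y, y ≠ x ∧ IsAsymptoticPair T x y}
  set E := (toMeasurable μ S)ᶜ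
  have hEm : MeasurableSet E := (measurableSet_toMeasurable μ S).compl
  have hEpos : μ E ≠ 0 := by
    rwa [Ne, prob_compl_eq_zero_iff (measurableSet_toMeasurable μ S), measure_toMeasurable]
  have hisolated : ∀ x ∈ E, ∀ y, IsAsymptoticPair T x y → y = x := fun x hx y hxy =>
    by_contra fun hne => hx (subset_toMeasurable μ S ⟨y, hne, hxy⟩)
  have hinj : ∀ n, InjOn T^[n] E := fun n x _ y hy hxy =>
    hisolated y hy x ((isAsymptoticPair_iterate_iff n).1 (hxy ▸ IsAsymptoticPair.refl _))
  have hWm : MeasurableSet (⋃ n, T^[n] '' E) := MeasurableSet.iUnion fun n =>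
    hEm.image_of_measurable_injOn (herg.measurable.iterate n) (hinj n)
  have hWT : (⋃ n, T^[n] '' E) ⊆ T ⁻¹' ⋃ n, T^[n] '' E := by
    refine iUnion_subset fun n => ?_
    rintro _ ⟨x, hx, rfl⟩
    exact mem_iUnion.2 ⟨n + 1, x, hx, Function.iterate_succ_apply' T n x⟩
  have hEW : E ⊆ ⋃ n, T^[n] '' E := fun x hx => mem_iUnion.2 ⟨0, x, hx, rfl⟩
  refine ⟨_, hWm, ?_, ?_⟩
  · refine (herg.ae_empty_or_univ_of_ae_le_preimage' hWm.nullMeasurableSet hWT.eventuallyLE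
      (measure_ne_top _ _)).resolve_left fun hempty => hEpos ?_
    exact measure_mono_null hEW (ae_eq_empty.1 hempty)
  · rintro x hx y hy hxy
    obtain ⟨n, a, ha, rfl⟩ := mem_iUnion.1 hx
    obtain ⟨m, b, hb, rfl⟩ := mem_iUnion.1 hy
    exact eq_of_isAsymptoticPair_iterate hisolated ha hb hxy

end AsymptoticPairs

lemma exists_partKS_pos {X : Type*} [MeasurableSpace X] {μ : Measure X} {T : X → X}
    (h : 0 < ksEntropy μ T) : ∃ (k : ℕ) (p : X → Fin k), Measurable p ∧ 0 < partKS μ T p := by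
  simpa only [ksEntropy, lt_iSup_iff, ENNReal.ofReal_pos, exists_prop] using h

theorem positive_entropy_asymptotic_pairs_noninvertible_general
    {X : Type*} [PseudoMetricSpace X] [MeasurableSpace X] [OpensMeasurableSpace X]
    [StandardBorelSpace X] (hX : TotallyBounded (univ : Set X)) {T : X → X} {μ : Measure X}
    [IsProbabilityMeasure μ] (herg : Ergodic T μ) (hpos : 0 < ksEntropy μ T) :
    μ {x : X | ∃ y : X, y ≠ x ∧ IsAsymptoticPair T x y} = 1 := by
  by_contra hne
  obtain ⟨k, p, hp, hpKS⟩ := exists_partKS_pos hpos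
  obtain ⟨W, hWm, hWμ, hW⟩ := exists_ae_univ_forall_isAsymptoticPair_eq herg hne
  choose l q hqm hq using fun n : ℕ =>
    exists_fine_partition hX (Nat.one_div_pos_of_nat (α := ℝ) (n := n))
  obtain ⟨m, hm⟩ := exists_le_condPartEntropy_iSup_tailAlg herg.toMeasurePreserving
    hp.comap_le (half_lt_self hpKS) fun n => isFinitePartAlg_partAlg (hqm n)
  have hF : ⨆ n, tailAlg T (partAlg (q n)) (m n) ≤ ‹MeasurableSpace X› :=
    iSup_le fun n => tailAlg_le herg.measurable (hqm n) (m n)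
  have hzero := condPartEntropy_eq_zero hF fun A hA => subModNull_of_injOn hF
    (measurable_iSup_tailAlg T q m) hWm hWμ
    (fun x hx y hy hxy => hW x hx y hy (isAsymptoticPair_of_forall_eq
      tendsto_one_div_add_atTop_nhds_zero_nat hq fun n j => congrFun (congrFun hxy n) j))
    A (hp.comap_le A hA)
  linarith

/-- Non-invertible case: if `T` is a continuous surjection of a compact
metric space and `μ` is a `T`-ergodic Borel probability measure with `h_μ(X,T) > 0`,
then the set of points belonging to a proper asymptotic pair has `μ`-measure `1`. -/
theorem positive_entropy_asymptotic_pairs_noninvertible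
    {X : Type*} [MetricSpace X] [CompactSpace X] [MeasurableSpace X] [BorelSpace X]
    (T : X → X) (hcont : Continuous T) (hsurj : Function.Surjective T)
    (μ : Measure X) [IsProbabilityMeasure μ] (herg : Ergodic T μ)
    (hpos : 0 < ksEntropy μ T) :
    μ {x : X | ∃ y : X, y ≠ x ∧ IsAsymptoticPair T x y} = 1 :=
  positive_entropy_asymptotic_pairs_noninvertible_general isCompact_univ.totallyBounded herg hpos
end

section
/- Let (X,T) be an invertible topological dynamical system, let A denote the set of asymptotic pairs in X×X and E(X,T) the set of topological entropy pairs. Then the closure of A in X×X contains E(X,T); in other words, asymptotic pairs are dense in the set of entropy pairs. -/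
open MeasureTheory Filter Topology Set
open scoped symmDiff Classical ENNReal NNReal

/-!
Positive entropy of the cover `{Uᶜ, Vᶜ}` yields exponentially large finite trees of partial
itineraries through `U` and `V`, in which the letters after a given time decide whether that time is
constrained at all. The Shannon entropy of the uniform probability on these trees, averaged over
shifts and passed to an ultralimit, is a stationary entropy functional for which the letter at time
zero is not determined by its own future. As in the theory of the Pinsker algebra, the remote future
of a finite partition carries almost no additional information. So along a sequence of ever finer
finite partitions one can choose delays `n j` such that the names with respect to the `j`-th
partition from time `n j` on still do not determine the letter. For every finite set of times and
partitions there are therefore a point of `U` and a point of `V` with the same names, and a limit of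
such pairs is an asymptotic pair in `U ×ˢ V`.
-/

open scoped BigOperators Finset

section EntropyFunctional

variable {L : Type*} [SemilatticeSup L]

/-- The conditional entropy `H(a | c) = H(a ⊔ c) - H(c)` of an entropy functional. -/
def condEntropy (h : L → ℝ) (a c : L) : ℝ := h (a ⊔ c) - h c

theorem condEntropy_sup (h : L → ℝ) (a b c : L) :
    condEntropy h (a ⊔ b) c = condEntropy h a (b ⊔ c) + condEntropy h b c := by
  simp only [condEntropy, sup_assoc]
  ring

variable [OrderBot L] {σ : SupBotHom L L} {h : L → ℝ}

/-- The axioms of a polymatroid rank function, satisfied by Shannon entropy on a family of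
observables ordered by joins; submodularity is stated as diminishing returns. -/
structure IsEntropyFunctional (h : L → ℝ) : Prop where
  map_bot : h ⊥ = 0
  mono : Monotone h
  submodular : ∀ a ⦃b c⦄, b ≤ c → h (a ⊔ c) + h b ≤ h (a ⊔ b) + h c

/-- The join of the translates `σ^i a` over the times `m ≤ i < n`. -/
def window (σ : SupBotHom L L) (a : L) (m n : ℕ) : L :=
  (Finset.Ico m n).sup fun i => σ^[i] a

/-- The entropy rate `h(a) = lim_n H(a | σ a ⊔ ⋯ ⊔ σ^n a)` of `a` under the time shift `σ`.
The limit is decreasing, hence encoded as an infimum. -/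
noncomputable def entropyRate (σ : SupBotHom L L) (h : L → ℝ) (a : L) : ℝ :=
  ⨅ n : ℕ, condEntropy h a (window σ a 1 n)

theorem iterate_sup (σ : SupBotHom L L) (i : ℕ) (a b : L) :
    σ^[i] (a ⊔ b) = σ^[i] a ⊔ σ^[i] b :=
  (Function.Semiconj₂.iterate (map_sup σ) i).eq a b

theorem iterate_le_window (σ : SupBotHom L L) (a : L) {i m n : ℕ} (hm : m ≤ i) (hn : i < n) :
    σ^[i] a ≤ window σ a m n :=
  Finset.le_sup (f := fun i => σ^[i] a) (Finset.mem_Ico.2 ⟨hm, hn⟩)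

theorem window_mono (σ : SupBotHom L L) (a : L) {m m' n n' : ℕ} (hm : m' ≤ m) (hn : n ≤ n') :
    window σ a m n ≤ window σ a m' n' :=
  Finset.sup_mono (Finset.Ico_subset_Ico hm hn)

theorem window_self (σ : SupBotHom L L) (a : L) (m : ℕ) : window σ a m m = ⊥ := by
  simp [window]

theorem window_sup (σ : SupBotHom L L) (a b : L) (m n : ℕ) :
    window σ (a ⊔ b) m n = window σ a m n ⊔ window σ b m n := by
  simp only [window, iterate_sup, ← Finset.sup_sup, Pi.sup_def]

theorem window_sup_window (σ : SupBotHom L L) (a : L) {l m n : ℕ} (hlm : l ≤ m) (hmn : m ≤ n) :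
    window σ a l m ⊔ window σ a m n = window σ a l n := by
  rw [window, window, window, ← Finset.sup_union, Finset.Ico_union_Ico_eq_Ico hlm hmn]

theorem window_zero_succ (σ : SupBotHom L L) (a : L) (n : ℕ) :
    window σ a 0 (n + 1) = a ⊔ window σ a 1 (n + 1) := by
  rw [← window_sup_window σ a zero_le_one (Nat.le_add_left 1 n)]
  simp [window]

theorem window_iterate (σ : SupBotHom L L) (a : L) (k m n : ℕ) :
    window σ (σ^[k] a) m n = window σ a (m + k) (n + k) := by
  simp only [window, ← Finset.map_add_right_Ico, Finset.sup_map, ← Function.iterate_add_apply]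
  rfl

theorem map_window (σ : SupBotHom L L) (a : L) (m n : ℕ) :
    σ (window σ a m n) = window σ a (m + 1) (n + 1) := by
  rw [window, window, ← Finset.map_add_right_Ico, Finset.sup_map, map_finset_sup]
  simp [Function.comp_def, Function.iterate_succ_apply']

namespace IsEntropyFunctional

theorem nonneg (hh : IsEntropyFunctional h) (a : L) : 0 ≤ h a :=
  hh.map_bot ▸ hh.mono bot_le

theorem map_sup_le (hh : IsEntropyFunctional h) (a b : L) : h (a ⊔ b) ≤ h a + h b := by
  simpa [hh.map_bot] using hh.submodular a (bot_le (a := b))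

theorem map_finset_sup_le {ι : Type*} (hh : IsEntropyFunctional h) (s : Finset ι) (f : ι → L) :
    h (s.sup f) ≤ ∑ i ∈ s, h (f i) := by
  induction s using Finset.cons_induction with
  | empty => simp [hh.map_bot]
  | cons i s hi ih =>
    rw [Finset.sup_cons, Finset.sum_cons]
    exact (hh.map_sup_le _ _).trans (by gcongr)

theorem condEntropy_nonneg (hh : IsEntropyFunctional h) (a c : L) : 0 ≤ condEntropy h a c :=
  sub_nonneg.2 (hh.mono le_sup_right)

theorem condEntropy_antitone (hh : IsEntropyFunctional h) (a : L) :
    Antitone (condEntropy h a) := by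
  intro b c hbc
  have := hh.submodular a hbc
  simp only [condEntropy]
  linarith

theorem bddBelow_condEntropy (hh : IsEntropyFunctional h) (a : L) (c : ℕ → L) :
    BddBelow (range fun n => condEntropy h a (c n)) :=
  ⟨0, by rintro _ ⟨n, rfl⟩; exact hh.condEntropy_nonneg a _⟩

theorem entropyRate_le (hh : IsEntropyFunctional h) (a : L) (n : ℕ) :
    entropyRate σ h a ≤ condEntropy h a (window σ a 1 n) :=
  ciInf_le (hh.bddBelow_condEntropy a _) n

theorem tendsto_condEntropy_window (hh : IsEntropyFunctional h) (a : L) :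
    Tendsto (fun n => condEntropy h a (window σ a 1 n)) atTop (𝓝 (entropyRate σ h a)) :=
  tendsto_atTop_ciInf
    (fun _ _ hmn => hh.condEntropy_antitone a (window_mono σ a le_rfl hmn))
    (hh.bddBelow_condEntropy a _)

end IsEntropyFunctional

/-- An entropy functional invariant under the time shift `σ`. -/
structure IsStationaryEntropy (σ : SupBotHom L L) (h : L → ℝ) : Prop
    extends IsEntropyFunctional h where
  map_shift : ∀ a, h (σ a) = h a

namespace IsStationaryEntropy

theorem block_succ_sub_block (hh : IsStationaryEntropy σ h) (a : L) (n : ℕ) :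
    h (window σ a 0 (n + 1)) - h (window σ a 0 n) = condEntropy h a (window σ a 1 (n + 1)) := by
  rw [← hh.map_shift (window σ a 0 n), map_window, window_zero_succ, condEntropy]

theorem block_add_mul_entropyRate_le (hh : IsStationaryEntropy σ h) (a : L) (N n : ℕ) :
    h (window σ a 0 N) + n * entropyRate σ h a ≤ h (window σ a 0 (n + N)) := by
  induction n with
  | zero => simp
  | succ n ih =>
    have hstep := hh.block_succ_sub_block a (n + N)
    have hrate := hh.entropyRate_le (σ := σ) a (n + N + 1)
    rw [show n + 1 + N = n + N + 1 by omega]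
    push_cast
    linarith

theorem tendsto_block_div (hh : IsStationaryEntropy σ h) (a : L) :
    Tendsto (fun n : ℕ => h (window σ a 0 n) / n) atTop (𝓝 (entropyRate σ h a)) := by
  have hcesaro := ((hh.tendsto_condEntropy_window (σ := σ) a).comp (tendsto_add_atTop_nat 1)).cesaro
  refine hcesaro.congr fun n => ?_
  simp only [Function.comp_apply, ← hh.block_succ_sub_block]
  rw [Finset.sum_range_sub fun n => h (window σ a 0 n), window_self, hh.map_bot, sub_zero,
    inv_mul_eq_div]

theorem staggered_window_le (hh : IsStationaryEntropy σ h) (a b : L) {d : ℝ} {N m : ℕ}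
    (hd : ∀ n < m, condEntropy h a (window σ a 1 N ⊔ window σ b (n + 1) N) ≤ d) :
    ∀ n ≤ m, h (window σ a 0 (n + N) ⊔ window σ b n (n + N)) ≤
      h (window σ (a ⊔ b) 0 N) + n * d := by
  intro n hn
  induction n with
  | zero => simp [window_sup]
  | succ n ih =>
    have hshift := hh.map_shift (window σ a 0 (n + N) ⊔ window σ b n (n + N))
    rw [map_sup σ, map_window, map_window, zero_add] at hshift
    have hcond : condEntropy h a
        (window σ a 1 (n + N + 1) ⊔ window σ b (n + 1) (n + N + 1)) ≤ d :=
      (hh.condEntropy_antitone a (sup_le_sup (window_mono σ a le_rfl (by omega))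
        (window_mono σ b le_rfl (by omega)))).trans (hd n hn)
    have hsplit := window_zero_succ σ a (n + N)
    rw [show n + 1 + N = n + N + 1 by omega, hsplit, sup_assoc]
    rw [condEntropy] at hcond
    push_cast
    linarith [ih (by omega)]

theorem mul_le_block_of_condEntropy_le (hh : IsStationaryEntropy σ h) (a b : L) {d : ℝ}
    {N n : ℕ} (hd : ∀ k < n, condEntropy h a (window σ a 1 N ⊔ window σ b (k + 1) N) ≤ d) :
    n * (entropyRate σ h (a ⊔ b) + entropyRate σ h a - d) ≤ h (window σ (a ⊔ b) 0 n) := by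
  have hstaggered := hh.staggered_window_le a b hd n le_rfl
  have hjoint := hh.block_add_mul_entropyRate_le (a ⊔ b) N n
  have hsingle := hh.block_add_mul_entropyRate_le a 0 n
  rw [window_self, hh.map_bot, zero_add, add_zero] at hsingle
  have hle : window σ a 0 n ≤ window σ a 0 (n + N) ⊔ window σ b n (n + N) :=
    le_sup_of_le_left (window_mono σ a le_rfl (Nat.le_add_right n N))
  have hsub := hh.submodular (window σ b 0 n) hle
  have hunion : window σ b 0 n ⊔ (window σ a 0 (n + N) ⊔ window σ b n (n + N)) =
      window σ (a ⊔ b) 0 (n + N) := by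
    rw [sup_left_comm, window_sup_window σ b n.zero_le (Nat.le_add_right n N), window_sup]
  rw [hunion, sup_comm (window σ b 0 n), ← window_sup] at hsub
  linarith

/-- Otherwise every time step would save `η` over `n` steps, forcing the entropy of the
`n`-blocks of `a ⊔ b` above `n` times its rate plus `n * η`. -/
theorem exists_remote_condEntropy_ge (hh : IsStationaryEntropy σ h) (a b : L) {η : ℝ}
    (hη : 0 < η) : ∃ n, ∀ N,
      entropyRate σ h a - η ≤ condEntropy h a (window σ a 1 N ⊔ window σ b n N) := by
  by_contra! hcon
  choose N hN using hcon
  have hblock (n : ℕ) :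
      n * (entropyRate σ h (a ⊔ b) + η) ≤ h (window σ (a ⊔ b) 0 n) := by
    have := hh.mul_le_block_of_condEntropy_le a b (n := n) (d := entropyRate σ h a - η)
      (N := (Finset.range n).sup fun k => N (k + 1)) fun k hk => by
        have hNk : N (k + 1) ≤ (Finset.range n).sup fun k => N (k + 1) :=
          Finset.le_sup (f := fun k => N (k + 1)) (Finset.mem_range.2 hk)
        exact (hh.condEntropy_antitone a (sup_le_sup (window_mono σ a le_rfl hNk)
          (window_mono σ b le_rfl hNk))).trans (hN (k + 1)).le
    linarith
  have hlim : entropyRate σ h (a ⊔ b) + η ≤ entropyRate σ h (a ⊔ b) := by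
    refine ge_of_tendsto (hh.tendsto_block_div (a ⊔ b)) ?_
    filter_upwards [eventually_gt_atTop 0] with n hn
    rw [le_div_iff₀' (by exact_mod_cast hn)]
    exact hblock n
  linarith

end IsStationaryEntropy

/-- The present of `w` keeps a definite amount of uncertainty given the present of `v` and the
whole future of `w ⊔ v`. -/
def IsUncertainGiven (σ : SupBotHom L L) (h : L → ℝ) (w v : L) : Prop :=
  ∃ c > 0, ∀ N, c ≤ condEntropy h w (v ⊔ window σ (w ⊔ v) 1 N)

namespace IsUncertainGiven

theorem exists_sup_iterate (hh : IsStationaryEntropy σ h) {w v : L}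
    (hwv : IsUncertainGiven σ h w v) (q : L) :
    ∃ n, IsUncertainGiven σ h w (v ⊔ σ^[n] q) := by
  obtain ⟨c, hc, hwv⟩ := hwv
  obtain ⟨n, hn⟩ := hh.exists_remote_condEntropy_ge (w ⊔ v) q (by positivity : 0 < c / 4)
  obtain ⟨n₀, hn₀⟩ := ((hh.tendsto_condEntropy_window (σ := σ) (w ⊔ v)).eventually_lt_const
    (by linarith : _ < entropyRate σ h (w ⊔ v) + c / 4)).exists_forall_of_atTop
  refine ⟨n, c / 2, by positivity, fun N => ?_⟩
  set M := N + n + n₀ + 1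
  set future := window σ (w ⊔ v) 1 M
  set remote := window σ q n M
  have hle : v ⊔ σ^[n] q ⊔ window σ (w ⊔ (v ⊔ σ^[n] q)) 1 N ≤ v ⊔ (future ⊔ remote) := by
    rw [← sup_assoc, window_sup, window_iterate]
    refine sup_le (sup_le le_sup_left ?_) (sup_le ?_ ?_)
    · exact (iterate_le_window σ q le_rfl (by omega)).trans (le_sup_right.trans le_sup_right)
    · exact (window_mono σ _ le_rfl (by omega)).trans (le_sup_left.trans le_sup_right)
    · exact (window_mono σ q (by omega) (by omega)).trans (le_sup_right.trans le_sup_right)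
  have hremote := hn M
  have hfuture := hn₀ M (by omega)
  rw [condEntropy_sup] at hremote hfuture
  have hv : condEntropy h v (future ⊔ remote) ≤ condEntropy h v future :=
    hh.condEntropy_antitone v le_sup_left
  linarith [hwv M, hh.condEntropy_antitone w hle]

theorem lt_map_sup {w v : L} (hwv : IsUncertainGiven σ h w v) (N : ℕ) :
    h (v ⊔ window σ (w ⊔ v) 1 N) < h (w ⊔ (v ⊔ window σ (w ⊔ v) 1 N)) := by
  obtain ⟨c, hc, hwv⟩ := hwv
  exact sub_pos.1 (hc.trans_le (hwv N))

theorem exists_delays (hh : IsStationaryEntropy σ h) {w v : L}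
    (hwv : IsUncertainGiven σ h w v) (q : ℕ → L) :
    ∃ n : ℕ → ℕ, ∀ k, IsUncertainGiven σ h w (v ⊔ (Finset.range k).sup fun j => σ^[n j] (q j)) := by
  choose delay hdelay using fun (k : ℕ) (u : {u // IsUncertainGiven σ h w u}) =>
    u.2.exists_sup_iterate hh (q k)
  let u (k : ℕ) : {u // IsUncertainGiven σ h w u} :=
    k.rec ⟨v, hwv⟩ fun k u => ⟨u.1 ⊔ σ^[delay k u] (q k), hdelay k u⟩
  have hu (k : ℕ) : (u k).1 = v ⊔ (Finset.range k).sup fun j => σ^[delay j (u j)] (q j) := by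
    induction k with
    | zero => simp [u]
    | succ k ih =>
      rw [Finset.range_add_one, Finset.sup_insert, sup_comm (σ^[_] _), ← sup_assoc, ← ih]
  exact ⟨fun k => delay k (u k), fun k => hu k ▸ (u k).2⟩

theorem exists_delays_forall_lt_map_sup (hh : IsStationaryEntropy σ h) {w v : L}
    (hwv : IsUncertainGiven σ h w v) (q : ℕ → L) :
    ∃ n : ℕ → ℕ, ∀ k, ∃ a, h a < h (w ⊔ a) ∧ v ≤ a ∧
      ∀ j < k, ∀ i, n j ≤ i → i < n j + k → σ^[i] (q j) ≤ a := by
  obtain ⟨n, hn⟩ := hwv.exists_delays hh q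
  refine ⟨n, fun k => ⟨_, (hn k).lt_map_sup k, le_sup_left.trans le_sup_left, ?_⟩⟩
  intro j hj i hji hik
  set u := v ⊔ (Finset.range k).sup fun j => σ^[n j] (q j)
  have hq : σ^[n j] (q j) ≤ u :=
    (Finset.le_sup (f := fun j => σ^[n j] (q j)) (Finset.mem_range.2 hj)).trans le_sup_right
  obtain ⟨t, rfl⟩ := Nat.exists_eq_add_of_le' hji
  rcases t.eq_zero_or_pos with rfl | ht
  · rw [zero_add]
    exact hq.trans le_sup_left
  · rw [Function.iterate_add_apply]
    have hmono : Monotone σ^[t] := (OrderHomClass.mono σ).iterate t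
    exact (hmono (hq.trans le_sup_right)).trans
      ((iterate_le_window σ (w ⊔ u) ht (by omega)).trans le_sup_right)

end IsUncertainGiven

end EntropyFunctional

theorem exists_tendsto_hyperfilter_of_bounded {f : ℕ → ℝ} {a b : ℝ}
    (hf : ∀ n, f n ∈ Icc a b) : ∃ x, Tendsto f (hyperfilter ℕ) (𝓝 x) := by
  obtain ⟨x, -, hx⟩ := isCompact_Icc.ultrafilter_le_nhds ((hyperfilter ℕ).map f)
    (tendsto_principal.2 (Eventually.of_forall hf))
  exact ⟨x, hx⟩

theorem tendsto_expect_range_succ_sub {f : ℕ → ℕ → ℝ} {B : ℝ}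
    (hf : ∀ M i, f M i ∈ Icc 0 B) :
    Tendsto (fun M => (𝔼 i ∈ Finset.range (M + 1), f M (i + 1)) -
      𝔼 i ∈ Finset.range (M + 1), f M i) atTop (𝓝 0) := by
  refine squeeze_zero_norm (a := fun M : ℕ => B * (1 / ((M : ℝ) + 1))) (fun M => ?_) ?_
  · rw [Finset.expect_eq_sum_div_card, Finset.expect_eq_sum_div_card, ← sub_div,
      ← Finset.sum_sub_distrib, Finset.sum_range_sub (f M), Finset.card_range, mul_one_div,
      Real.norm_eq_abs, abs_div, Nat.cast_succ, abs_of_pos (Nat.cast_add_one_pos (α := ℝ) M)]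
    gcongr
    have h0 := hf M 0
    have h1 := hf M (M + 1)
    rw [abs_sub_le_iff]
    constructor <;> linarith [h0.1, h0.2, h1.1, h1.2]
  · simpa using tendsto_one_div_add_atTop_nhds_zero_nat.const_mul B

theorem exists_isStationaryEntropy_tendsto_expect
    {L : Type*} [SemilatticeSup L] [OrderBot L] (σ : SupBotHom L L) {g : ℕ → L → ℝ}
    (hg : ∀ M, IsEntropyFunctional (g M)) (hB : ∀ a, ∃ B, ∀ M i, g M (σ^[i] a) ≤ B) :
    ∃ h, IsStationaryEntropy σ h ∧ ∀ a, Tendsto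
      (fun M => 𝔼 i ∈ Finset.range (M + 1), g M (σ^[i] a)) (hyperfilter ℕ) (𝓝 (h a)) := by
  choose B hB using hB
  have hIcc (a : L) (M i : ℕ) : g M (σ^[i] a) ∈ Icc 0 (B a) := ⟨(hg M).nonneg _, hB a M i⟩
  have hne (M : ℕ) : (Finset.range (M + 1)).Nonempty := Finset.nonempty_range_add_one
  choose h hh using fun a => exists_tendsto_hyperfilter_of_bounded
    (f := fun M => 𝔼 i ∈ Finset.range (M + 1), g M (σ^[i] a)) fun M =>
      ⟨Finset.expect_nonneg fun i _ => (hIcc a M i).1,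
        Finset.expect_le (hne M) fun i _ => (hIcc a M i).2⟩
  refine ⟨h, ⟨⟨?_, fun a b hab => ?_, fun a b c hbc => ?_⟩, fun a => ?_⟩, hh⟩
  · refine tendsto_nhds_unique (hh ⊥) ?_
    simp [Function.iterate_fixed (map_bot σ), (hg _).map_bot]
  · exact le_of_tendsto_of_tendsto' (hh a) (hh b) fun M => Finset.expect_le_expect fun i _ =>
      (hg M).mono ((OrderHomClass.mono σ).iterate i hab)
  · refine le_of_tendsto_of_tendsto' ((hh _).add (hh _)) ((hh _).add (hh _)) fun M => ?_
    rw [← Finset.expect_add_distrib, ← Finset.expect_add_distrib]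
    refine Finset.expect_le_expect fun i _ => ?_
    simpa only [iterate_sup] using
      (hg M).submodular (σ^[i] a) ((OrderHomClass.mono σ).iterate i hbc)
  · have hsub := (tendsto_expect_range_succ_sub (hIcc a)).mono_left Nat.hyperfilter_le_atTop
    simp only [Function.iterate_succ_apply] at hsub
    exact sub_eq_zero.1 (tendsto_nhds_unique ((hh (σ a)).sub (hh a)) hsub)

section UniformEntropy

variable {Ω : Type*} [Fintype Ω] {r s t : Setoid Ω} {a b : Ω}

/-- The class of `a` in the finite partition of `Ω` given by the equivalence relation `r`. -/
noncomputable def equivClass (r : Setoid Ω) (a : Ω) : Finset Ω :=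
  {b | r a b}

theorem mem_equivClass : b ∈ equivClass r a ↔ r a b := by
  simp [equivClass]

theorem card_equivClass_pos (r : Setoid Ω) (a : Ω) : (0 : ℝ) < #(equivClass r a) :=
  Nat.cast_pos.2 (Finset.card_pos.2 ⟨a, mem_equivClass.2 (r.refl' a)⟩)

theorem equivClass_eq_of_rel (hab : r a b) : equivClass r a = equivClass r b := by
  ext c
  rw [mem_equivClass, mem_equivClass]
  exact ⟨r.trans' (r.symm' hab), r.trans' hab⟩

theorem equivClass_mono (hrs : r ≤ s) (a : Ω) : equivClass r a ⊆ equivClass s a :=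
  fun _ hb => mem_equivClass.2 (hrs (mem_equivClass.1 hb))

theorem sum_inv_card_equivClass_le_one {A : Finset Ω} (hA : ∀ a ∈ A, ∀ b ∈ A, r a b) :
    ∑ a ∈ A, (#(equivClass r a) : ℝ)⁻¹ ≤ 1 := by
  obtain rfl | ⟨b, hb⟩ := A.eq_empty_or_nonempty
  · simp
  have hcongr : ∀ a ∈ A, (#(equivClass r a) : ℝ)⁻¹ = (#(equivClass r b) : ℝ)⁻¹ := fun a ha => by
    rw [equivClass_eq_of_rel (hA a ha b hb)]
  have hcard : #A ≤ #(equivClass r b) :=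
    Finset.card_le_card fun a ha => mem_equivClass.2 (hA b hb a ha)
  rw [Finset.sum_congr rfl hcongr, Finset.sum_const, nsmul_eq_mul,
    mul_inv_le_iff₀ (card_equivClass_pos r b), one_mul]
  exact_mod_cast hcard

/-- The Shannon entropy of the partition of `Ω` into the classes of `r`, for the uniform
probability on `Ω`. It is written as the mean of the information function, so that
classes never have to be enumerated. -/
noncomputable def uniformEntropy (r : Setoid Ω) : ℝ :=
  𝔼 a, Real.log (Fintype.card Ω / #(equivClass r a))

theorem uniformEntropy_antitone : Antitone (uniformEntropy : Setoid Ω → ℝ) := by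
  intro r s hrs
  refine Finset.expect_le_expect fun a _ => ?_
  have : Nonempty Ω := ⟨a⟩
  have hr := card_equivClass_pos r a
  have hs := card_equivClass_pos s a
  have hcard := equivClass_mono hrs a
  gcongr

theorem uniformEntropy_top : uniformEntropy (⊤ : Setoid Ω) = 0 := by
  simp [uniformEntropy, equivClass, Setoid.top_def]

theorem uniformEntropy_bot : uniformEntropy (⊥ : Setoid Ω) = Real.log (Fintype.card Ω) := by
  cases isEmpty_or_nonempty Ω <;> simp [uniformEntropy, equivClass, Finset.filter_eq]

theorem expect_log_le_of_sum_le_card [Nonempty Ω] {f : Ω → ℝ} (hf : ∀ a, 0 < f a)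
    (hsum : ∑ a, f a ≤ Fintype.card Ω) : 𝔼 a, Real.log (f a) ≤ 0 := by
  refine (Finset.expect_le_expect fun a _ => Real.log_le_sub_one_of_pos (hf a)).trans ?_
  rw [Finset.expect_sub_distrib, Fintype.expect_const, sub_nonpos, Fintype.expect_eq_sum_div_card]
  exact div_le_one_of_le₀ hsum (Nat.cast_nonneg _)

theorem uniformEntropy_ker_le_log_card {β : Type*} [Fintype β] (f : Ω → β) :
    uniformEntropy (Setoid.ker f) ≤ Real.log (Fintype.card β) := by
  cases isEmpty_or_nonempty Ω
  · simpa [uniformEntropy] using Real.log_natCast_nonneg _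
  have : Nonempty β := .map f inferInstance
  set N := fun a => (#(equivClass (Setoid.ker f) a) : ℝ)
  have hN (a : Ω) : 0 < N a := card_equivClass_pos _ a
  have hlog (a : Ω) : Real.log (Fintype.card Ω / N a / Fintype.card β) =
      Real.log (Fintype.card Ω / N a) - Real.log (Fintype.card β) := by
    rw [Real.log_div (by have := hN a; positivity) (by positivity)]
  have hclasses : ∑ a, (N a)⁻¹ ≤ Fintype.card β := by
    rw [← Finset.sum_fiberwise _ f, ← Finset.card_univ, ← nsmul_one, ← Finset.sum_const]
    refine Finset.sum_le_sum fun b _ => sum_inv_card_equivClass_le_one fun a ha a' ha' => ?_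
    exact (Finset.mem_filter.1 ha).2.trans (Finset.mem_filter.1 ha').2.symm
  have hgibbs := expect_log_le_of_sum_le_card
    (f := fun a => Fintype.card Ω / N a / Fintype.card β)
    (fun a => by have := hN a; positivity) (by
      simp only [div_eq_mul_inv, ← Finset.sum_mul, ← Finset.mul_sum]
      rw [mul_assoc, ← div_eq_mul_inv]
      exact mul_le_of_le_one_right (Nat.cast_nonneg _) (div_le_one_of_le₀ hclasses (by positivity)))
  simp only [hlog, Finset.expect_sub_distrib, Fintype.expect_const, sub_nonpos] at hgibbs
  exact hgibbs

/-- Both sides count triples `(a, b, c)` with `a ~ b` for `t ⊓ s` and `a ~ c` for `r`; summing over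
`a` first leaves only pairs `b ~ c` for `s`. -/
theorem sum_card_equivClass_mul_div_le_card (hrs : r ≤ s) (t : Setoid Ω) :
    ∑ a, (#(equivClass (t ⊓ s) a) * #(equivClass r a) : ℝ) /
      (#(equivClass (t ⊓ r) a) * #(equivClass s a)) ≤ Fintype.card Ω := by
  have hclass (b c : Ω) : ∑ a ∈ equivClass (t ⊓ s) b ∩ equivClass r c,
      (#(equivClass (t ⊓ r) a) : ℝ)⁻¹ ≤ 1 := by
    refine sum_inv_card_equivClass_le_one fun a ha a' ha' => ?_
    simp only [Finset.mem_inter, mem_equivClass] at ha ha'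
    exact ⟨t.trans' (t.symm' ha.1.1) ha'.1.1, r.trans' (r.symm' ha.2) ha'.2⟩
  calc
    _ = ∑ a, ∑ _p ∈ equivClass (t ⊓ s) a ×ˢ equivClass r a,
        (#(equivClass (t ⊓ r) a) : ℝ)⁻¹ * (#(equivClass s a) : ℝ)⁻¹ := by
      simp only [Finset.sum_const, Finset.card_product, nsmul_eq_mul, Nat.cast_mul,
        div_eq_mul_inv, mul_inv]
    _ = ∑ p : Ω × Ω with s p.1 p.2, ∑ a ∈ equivClass (t ⊓ s) p.1 ∩ equivClass r p.2,
        (#(equivClass (t ⊓ r) a) : ℝ)⁻¹ * (#(equivClass s a) : ℝ)⁻¹ := by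
      refine Finset.sum_comm' fun a p => ?_
      simp only [Finset.mem_univ, true_and, Finset.mem_product, Finset.mem_inter, mem_equivClass,
        Finset.mem_filter]
      exact ⟨fun h => ⟨⟨(t ⊓ s).symm' h.1, r.symm' h.2⟩, s.trans' (s.symm' h.1.2) (hrs h.2)⟩,
        fun h => ⟨(t ⊓ s).symm' h.1.1, r.symm' h.1.2⟩⟩
    _ = ∑ b, ∑ c ∈ equivClass s b, (∑ a ∈ equivClass (t ⊓ s) b ∩ equivClass r c,
        (#(equivClass (t ⊓ r) a) : ℝ)⁻¹) * (#(equivClass s b) : ℝ)⁻¹ := by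
      rw [Finset.sum_finset_product _ Finset.univ (equivClass s) (by simp [mem_equivClass])]
      refine Finset.sum_congr rfl fun b _ => Finset.sum_congr rfl fun c _ => ?_
      rw [Finset.sum_mul]
      refine Finset.sum_congr rfl fun a ha => ?_
      rw [equivClass_eq_of_rel (mem_equivClass.1 (Finset.mem_inter.1 ha).1).2]
    _ ≤ ∑ b : Ω, ∑ c ∈ equivClass s b, 1 * (#(equivClass s b) : ℝ)⁻¹ := by
      gcongr
      exact hclass _ _
    _ = Fintype.card Ω := by
      simp [(card_equivClass_pos s _).ne']

theorem uniformEntropy_submodular (hrs : r ≤ s) (t : Setoid Ω) :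
    uniformEntropy (t ⊓ r) + uniformEntropy s ≤ uniformEntropy (t ⊓ s) + uniformEntropy r := by
  cases isEmpty_or_nonempty Ω
  · simp [uniformEntropy]
  have hlog (a : Ω) : Real.log ((#(equivClass (t ⊓ s) a) * #(equivClass r a) : ℝ) /
        (#(equivClass (t ⊓ r) a) * #(equivClass s a))) =
      Real.log (Fintype.card Ω / #(equivClass (t ⊓ r) a)) +
        Real.log (Fintype.card Ω / #(equivClass s a)) -
      (Real.log (Fintype.card Ω / #(equivClass (t ⊓ s) a)) +
        Real.log (Fintype.card Ω / #(equivClass r a))) := by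
    have hpos (r : Setoid Ω) : (#(equivClass r a) : ℝ) ≠ 0 := (card_equivClass_pos r a).ne'
    have hΩ : (Fintype.card Ω : ℝ) ≠ 0 := by positivity
    simp only [ne_eq, hpos, hΩ, not_false_eq_true, mul_eq_zero, or_self, Real.log_div,
      Real.log_mul]
    ring
  have hgibbs := expect_log_le_of_sum_le_card (fun a => div_pos
    (mul_pos (card_equivClass_pos (t ⊓ s) a) (card_equivClass_pos r a))
    (mul_pos (card_equivClass_pos (t ⊓ r) a) (card_equivClass_pos s a)))
    (sum_card_equivClass_mul_div_le_card hrs t)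
  simp only [hlog, Finset.expect_sub_distrib, Finset.expect_add_distrib, sub_nonpos] at hgibbs
  exact hgibbs

theorem exists_rel_not_rel_of_uniformEntropy_lt
    (h : uniformEntropy r < uniformEntropy (s ⊓ r)) : ∃ a b, r a b ∧ ¬ s a b := by
  by_contra! hrs
  exact h.not_ge (uniformEntropy_antitone (le_inf hrs le_rfl))

/-- The uniform entropy of the join of finitely many of the partitions `S i`. -/
noncomputable def jointEntropy {ι : Type*} (S : ι → Setoid Ω) (A : Finset ι) : ℝ :=
  uniformEntropy (A.inf S)

theorem isEntropyFunctional_jointEntropy {ι : Type*} [DecidableEq ι] (S : ι → Setoid Ω) :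
    IsEntropyFunctional (jointEntropy S) where
  map_bot := uniformEntropy_top
  mono _ _ hAB := uniformEntropy_antitone (Finset.inf_mono hAB)
  submodular A B C hBC := by
    simp only [jointEntropy, Finset.sup_eq_union, Finset.inf_union]
    exact uniformEntropy_submodular (Finset.inf_mono hBC) _

end UniformEntropy

section TailSetoid

variable {Ω β : Type*}

/-- The join of the partitions of `Ω` by the values of the process `w` at the times `j ≥ i`. -/
def tailSetoid (w : Ω → ℕ → β) (i : ℕ) : Setoid Ω :=
  Setoid.ker fun a => (Ici i).domRestrict (w a)

theorem tailSetoid_iff {w : Ω → ℕ → β} {i : ℕ} {a b : Ω} :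
    tailSetoid w i a b ↔ ∀ j ≥ i, w a j = w b j :=
  ⟨fun h j hj => congrFun h ⟨j, hj⟩, fun h => funext fun j => h j j.2⟩

theorem tailSetoid_eq_inf (w : Ω → ℕ → β) (i : ℕ) :
    tailSetoid w i = Setoid.ker (w · i) ⊓ tailSetoid w (i + 1) := by
  ext a b
  simp only [Setoid.inf_def, Pi.inf_apply, inf_Prop_eq, Setoid.ker_def, tailSetoid_iff]
  refine ⟨fun h => ⟨h i le_rfl, fun j hj => h j (by omega)⟩, fun h j hj => ?_⟩
  rcases hj.eq_or_lt with rfl | hij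
  · exact h.1
  · exact h.2 j hij

theorem log_card_le_sum_uniformEntropy [Fintype Ω] {w : Ω → ℕ → β} {m : ℕ} {J : ℕ → Setoid Ω}
    (hw : Function.Injective w) (hm : ∀ a b, ∀ i ≥ m, w a i = w b i)
    (hJ : ∀ i < m, tailSetoid w (i + 1) ≤ J i) :
    Real.log (Fintype.card Ω) ≤ ∑ i ∈ Finset.range m,
      (uniformEntropy (Setoid.ker (w · i) ⊓ J i) - uniformEntropy (J i)) := by
  have hzero : tailSetoid w 0 = ⊥ := by
    ext a b
    simp [tailSetoid_iff, ← funext_iff, hw.eq_iff]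
  have hlast : tailSetoid w m = ⊤ := by
    ext a b
    simpa [tailSetoid_iff, Setoid.top_def] using hm a b
  calc
    Real.log (Fintype.card Ω) = ∑ i ∈ Finset.range m,
        (uniformEntropy (tailSetoid w i) - uniformEntropy (tailSetoid w (i + 1))) := by
      rw [Finset.sum_range_sub' fun i => uniformEntropy (tailSetoid w i), hzero, hlast,
        uniformEntropy_bot, uniformEntropy_top, sub_zero]
    _ ≤ _ := by
      refine Finset.sum_le_sum fun i hi => ?_
      rw [tailSetoid_eq_inf]
      linarith [uniformEntropy_submodular (hJ i (Finset.mem_range.1 hi)) (Setoid.ker (w · i))]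

end TailSetoid

section ItineraryTree

variable {X κ : Type*} {T : X → X} {W : κ → Set X} {S S' : Set X} {m : ℕ} {u v : κ}

/-- `F` codes a cover of `S` by sets `⋂ i < m, T^{-i} (W (τ i))ᶜ`, one for every `τ ∈ F`. -/
def IsAvoidingCover (T : X → X) (W : κ → Set X) (S : Set X) (m : ℕ) (F : Finset (ℕ → κ)) : Prop :=
  ∀ x ∈ S, ∃ τ ∈ F, ∀ i < m, T^[i] x ∉ W (τ i)

/-- A finite set of partial itineraries through the sets `W b`, each realised by a point of `S`, in
which the word after time `i` determines whether time `i` is constrained. Read backwards from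
time `m`, the words are the branches of a tree that ramifies exactly at the constrained times.
The value `none` means that the itinerary is unconstrained at that time. -/
structure IsItineraryTree (T : X → X) (W : κ → Set X) (S : Set X) (m : ℕ)
    (G : Finset (ℕ → Option κ)) : Prop where
  eq_none : ∀ w ∈ G, ∀ i ≥ m, w i = none
  realised : ∀ w ∈ G, ∃ x ∈ S, ∀ i, ∀ b ∈ w i, T^[i] x ∈ W b
  isSome_eq : ∀ w ∈ G, ∀ w' ∈ G, ∀ i, (∀ j > i, w j = w' j) → (w i).isSome = (w' i).isSome

namespace IsAvoidingCover

theorem union {F F' : Finset (ℕ → κ)} (hF : IsAvoidingCover T W S m F)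
    (hF' : IsAvoidingCover T W S' m F') : IsAvoidingCover T W (S ∪ S') m (F ∪ F') := by
  rintro x (hx | hx)
  · obtain ⟨τ, hτ, h⟩ := hF x hx
    exact ⟨τ, Finset.mem_union_left _ hτ, h⟩
  · obtain ⟨τ, hτ, h⟩ := hF' x hx
    exact ⟨τ, Finset.mem_union_right _ hτ, h⟩

theorem image_update {F : Finset (ℕ → κ)} (hF : IsAvoidingCover T W S m F) {b : κ}
    (hb : ∀ x ∈ S, T^[m] x ∉ W b) :
    IsAvoidingCover T W S (m + 1) (F.image fun τ => Function.update τ m b) := by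
  intro x hx
  obtain ⟨τ, hτ, h⟩ := hF x hx
  refine ⟨_, Finset.mem_image_of_mem _ hτ, fun i hi => ?_⟩
  rcases Nat.lt_succ_iff_lt_or_eq.1 hi with him | rfl
  · rw [Function.update_of_ne him.ne]
    exact h i him
  · rw [Function.update_self]
    exact hb x hx

theorem exists_succ {F F' : Finset (ℕ → κ)} (huv : Disjoint (W u) (W v))
    (hF : IsAvoidingCover T W (S ∩ T^[m] ⁻¹' W u) m F)
    (hF' : IsAvoidingCover T W (S \ T^[m] ⁻¹' W u) m F') :
    ∃ D, IsAvoidingCover T W S (m + 1) D ∧ #D ≤ #F + #F' := by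
  have hcover := (hF.image_update (b := v) fun x hx => huv.notMem_of_mem_left hx.2).union
    (hF'.image_update (b := u) fun x hx => hx.2)
  rw [inter_union_sdiff] at hcover
  exact ⟨_, hcover, (Finset.card_union_le _ _).trans
    (add_le_add Finset.card_image_le Finset.card_image_le)⟩

end IsAvoidingCover

namespace IsItineraryTree

variable {G G' : Finset (ℕ → Option κ)}

theorem mono (hG : IsItineraryTree T W S m G) {n : ℕ} (hS : S ⊆ S') (hmn : m ≤ n) :
    IsItineraryTree T W S' n G where
  eq_none w hw i hi := hG.eq_none w hw i (hmn.trans hi)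
  realised w hw := (hG.realised w hw).imp fun _ h => ⟨hS h.1, h.2⟩
  isSome_eq := hG.isSome_eq

theorem eq_of_update_eq (hG : IsItineraryTree T W S m G) {w w' : ℕ → Option κ} (hw : w ∈ G)
    (hw' : w' ∈ G) {o : Option κ} {i : ℕ}
    (h : Function.update w m o i = Function.update w' m o i) : w i = w' i := by
  rcases eq_or_ne i m with rfl | him
  · rw [hG.eq_none w hw i le_rfl, hG.eq_none w' hw' i le_rfl]
  · simpa [him] using h

theorem card_image_update (hG : IsItineraryTree T W S m G) (o : Option κ) :
    #(G.image fun w => Function.update w m o) = #G :=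
  Finset.card_image_of_injOn fun _ hw _ hw' h =>
    funext fun i => hG.eq_of_update_eq hw hw' (congrFun h i)

theorem image_update (hG : IsItineraryTree T W S m G) {b : κ} (hb : ∀ x ∈ S, T^[m] x ∈ W b) :
    IsItineraryTree T W S (m + 1) (G.image fun w => Function.update w m (some b)) where
  eq_none := by
    simp only [Finset.forall_mem_image]
    intro w hw i hi
    rw [Function.update_of_ne (by omega), hG.eq_none w hw i (by omega)]
  realised := by
    simp only [Finset.forall_mem_image]
    intro w hw
    obtain ⟨x, hx, h⟩ := hG.realised w hw
    refine ⟨x, hx, fun i c hc => ?_⟩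
    rcases eq_or_ne i m with rfl | him
    · rw [Function.update_self, Option.mem_some_iff] at hc
      exact hc ▸ hb x hx
    · rw [Function.update_of_ne him] at hc
      exact h i c hc
  isSome_eq := by
    simp only [Finset.forall_mem_image]
    intro w hw w' hw' i h
    rcases eq_or_ne i m with rfl | him
    · simp
    · rw [Function.update_of_ne him, Function.update_of_ne him]
      exact hG.isSome_eq w hw w' hw' i fun j hj => hG.eq_of_update_eq hw hw' (h j hj)

theorem union (hG : IsItineraryTree T W S (m + 1) G) (hG' : IsItineraryTree T W S' (m + 1) G')
    (huv : u ≠ v) (hu : ∀ w ∈ G, w m = some u) (hv : ∀ w ∈ G', w m = some v) :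
    IsItineraryTree T W (S ∪ S') (m + 1) (G ∪ G') := by
  have hcross : ∀ w ∈ G, ∀ w' ∈ G', ∀ i, (∀ j > i, w j = w' j) →
      (w i).isSome = (w' i).isSome := by
    intro w hw w' hw' i h
    rcases lt_trichotomy i m with him | rfl | him
    · have hm := h m him
      rw [hu w hw, hv w' hw', Option.some_inj] at hm
      exact absurd hm huv
    · simp [hu w hw, hv w' hw']
    · rw [hG.eq_none w hw i him, hG'.eq_none w' hw' i him]
  have hleft := hG.mono (subset_union_left (t := S')) le_rfl
  have hright := hG'.mono (subset_union_right (s := S)) le_rfl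
  refine ⟨?_, ?_, ?_⟩ <;> simp only [Finset.mem_union, or_imp, forall_and]
  · exact ⟨hleft.eq_none, hright.eq_none⟩
  · exact ⟨hleft.realised, hright.realised⟩
  · exact ⟨⟨hleft.isSome_eq, fun w' hw' w hw i h => (hcross w hw w' hw' i fun j hj =>
      (h j hj).symm).symm⟩, hcross, hright.isSome_eq⟩

theorem exists_succ (huv : u ≠ v) (hG : IsItineraryTree T W (S ∩ T^[m] ⁻¹' W u) m G)
    (hG' : IsItineraryTree T W (S ∩ T^[m] ⁻¹' W v) m G') :
    ∃ D, IsItineraryTree T W S (m + 1) D ∧ #D = #G + #G' := by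
  have hu : ∀ w ∈ G.image fun w => Function.update w m (some u), w m = some u := by simp
  have hv : ∀ w ∈ G'.image fun w => Function.update w m (some v), w m = some v := by simp
  refine ⟨_, ((hG.image_update fun x hx => hx.2).union (hG'.image_update fun x hx => hx.2)
    huv hu hv).mono (union_subset inter_subset_left inter_subset_left) le_rfl, ?_⟩
  rw [Finset.card_union_of_disjoint, hG.card_image_update, hG'.card_image_update]
  refine Finset.disjoint_left.2 fun w hwG hwG' => huv ?_
  rw [← Option.some_inj, ← hu w hwG, hv w hwG']

end IsItineraryTree

theorem add_mul_pow_succ_le {f d : ℝ} {a : ℕ} (h : f ≤ (1 / 2) ^ a * (f + d)) (m : ℕ) :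
    (f + d) * (1 - (1 / 2) ^ a) ^ (m + 1) ≤ d * (1 - (1 / 2) ^ a) ^ m := by
  have hρ : (0 : ℝ) ≤ 1 - (1 / 2) ^ a := sub_nonneg.2 (pow_le_one₀ (by norm_num) (by norm_num))
  rw [pow_succ', ← mul_assoc]
  exact mul_le_mul_of_nonneg_right (by linarith) (pow_nonneg hρ m)

theorem le_add_pow_of_half_pow_mul_le {x y g g' : ℝ} {a : ℕ} (hx : (1 / 2) ^ a * x ≤ y)
    (hg : 0 ≤ g) (hg' : 0 ≤ g') (hy : y ≤ g ^ a) (hy' : y ≤ g' ^ a) : x ≤ (g + g') ^ a := by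
  have hmin : y ≤ (1 / 2) ^ a * (g + g') ^ a := by
    rw [← mul_pow]
    rcases le_total g g' with h | h
    · exact hy.trans (by gcongr; linarith)
    · exact hy'.trans (by gcongr; linarith)
  exact le_of_mul_le_mul_left (hx.trans hmin) (by positivity)

/-- Cutting along `T⁻ᵐ (W u)` or `T⁻ᵐ (W v)`, whichever needs the smaller cover, either the cover
of the complement already has almost full size, and its tree is kept, or both pieces have covers
of comparable size, and their trees are joined at time `m`. -/
theorem exists_avoidingCover_itineraryTree (T : X → X) (huv : u ≠ v)
    (hW : Disjoint (W u) (W v)) (a m : ℕ) (S : Set X) :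
    ∃ F G, IsAvoidingCover T W S m F ∧ IsItineraryTree T W S m G ∧
      (#F : ℝ) * (1 - (1 / 2) ^ a) ^ m ≤ (#G : ℝ) ^ a := by
  have hρ : (0 : ℝ) ≤ 1 - (1 / 2) ^ a := sub_nonneg.2 (pow_le_one₀ (by norm_num) (by norm_num))
  have hρ' : (1 : ℝ) - (1 / 2) ^ a ≤ 1 := sub_le_self _ (by positivity)
  induction m generalizing S with
  | zero =>
    obtain rfl | ⟨x, hx⟩ := S.eq_empty_or_nonempty
    · exact ⟨∅, ∅, by simp [IsAvoidingCover], ⟨by simp, by simp, by simp⟩, by simp⟩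
    · exact ⟨{fun _ => u}, {fun _ => none}, by simp [IsAvoidingCover],
        ⟨by simp, by simpa using ⟨x, hx⟩, by simp⟩, by simp⟩
  | succ m ih =>
    obtain ⟨Fu, Gu, hFu, hGu, hu⟩ := ih (S ∩ T^[m] ⁻¹' W u)
    obtain ⟨Fv, Gv, hFv, hGv, hv⟩ := ih (S ∩ T^[m] ⁻¹' W v)
    wlog hle : #Fu ≤ #Fv generalizing u v Fu Gu Fv Gv
    · exact this huv.symm hW.symm Fv Gv hFv hGv hv Fu Gu hFu hGu hu (le_of_not_ge hle)
    obtain ⟨F', G', hF', hG', h'⟩ := ih (S \ T^[m] ⁻¹' W u)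
    obtain ⟨F, hF, hFcard⟩ := hFu.exists_succ hW hF'
    have hFρ : (#F : ℝ) * (1 - (1 / 2) ^ a) ^ (m + 1) ≤
        (#Fu + #F') * (1 - (1 / 2) ^ a) ^ (m + 1) := by
      gcongr
      exact_mod_cast hFcard
    rcases le_total (#Fu : ℝ) ((1 / 2) ^ a * (#Fu + #F')) with hsmall | hlarge
    · exact ⟨F, G', hF, hG'.mono sdiff_subset m.le_succ,
        hFρ.trans ((add_mul_pow_succ_le hsmall m).trans h')⟩
    · obtain ⟨G, hG, hGcard⟩ := hGu.exists_succ huv hGv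
      refine ⟨F, G, hF, hG, hFρ.trans ?_⟩
      rw [hGcard, Nat.cast_add]
      refine le_add_pow_of_half_pow_mul_le (y := #Fu * (1 - (1 / 2) ^ a) ^ m) ?_
        (Nat.cast_nonneg _) (Nat.cast_nonneg _) hu (le_trans (by gcongr) hv)
      rw [← mul_assoc]
      gcongr ?_ * ?_
      exact pow_le_pow_of_le_one hρ hρ' m.le_succ

theorem coverNum_le_card {k : ℕ} {W : Fin k → Set X} {F : Finset (ℕ → Fin k)}
    (hF : IsAvoidingCover T W univ m F) : coverNum T (fun b => (W b)ᶜ) m ≤ #F := by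
  refine Nat.sInf_le ⟨fun j i => (F.equivFin.symm j : ℕ → Fin k) i, eq_univ_of_forall fun x => ?_⟩
  obtain ⟨τ, hτ, h⟩ := hF x trivial
  exact mem_iUnion.2 ⟨F.equivFin ⟨τ, hτ⟩, mem_iInter.2 fun i => by simpa using h i i.2⟩

theorem coverEntropyOf_mul_le_log_coverNum (T : X → X) {k : ℕ} (C : Fin k → Set X) (m : ℕ) :
    coverEntropyOf T C * (m + 1) ≤ Real.log (coverNum T C (m + 1)) := by
  rw [← le_div_iff₀ (by positivity)]
  exact ciInf_le ⟨0, by rintro _ ⟨n, rfl⟩; positivity⟩ m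

theorem exists_itineraryTree_mul_le_log_card {W : Fin 2 → Set X} (hW : Disjoint (W 0) (W 1))
    (hpos : 0 < coverEntropyOf T fun b => (W b)ᶜ) :
    ∃ c > 0, ∀ m : ℕ, ∃ G, IsItineraryTree T W univ (m + 1) G ∧ c * (m + 1) ≤ Real.log #G := by
  set h := coverEntropyOf T fun b => (W b)ᶜ
  have hexp : Real.exp (-(h / 2)) < 1 := Real.exp_lt_one_iff.2 (by linarith)
  obtain ⟨a, ha⟩ := exists_pow_lt_of_lt_one (sub_pos.2 hexp) one_half_lt_one
  have ha0 : a ≠ 0 := by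
    rintro rfl
    linarith [Real.exp_pos (-(h / 2)), pow_zero (1 / 2 : ℝ)]
  have hρ : Real.exp (-(h / 2)) ≤ 1 - (1 / 2) ^ a := by linarith
  have hρ0 := (Real.exp_pos _).trans_le hρ
  refine ⟨h / 2 / a, by positivity, fun m => ?_⟩
  obtain ⟨F, G, hF, hG, hFG⟩ := exists_avoidingCover_itineraryTree T zero_ne_one hW a (m + 1) univ
  refine ⟨G, hG, ?_⟩
  have hcover := coverEntropyOf_mul_le_log_coverNum T (fun b => (W b)ᶜ) m
  have hnum : 0 < coverNum T (fun b => (W b)ᶜ) (m + 1) := by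
    refine Nat.pos_of_ne_zero fun h0 => ?_
    rw [h0, Nat.cast_zero, Real.log_zero] at hcover
    exact hcover.not_gt (by positivity)
  have hnumF := coverNum_le_card hF
  have hlogF := Real.log_le_log (by positivity) (Nat.cast_le (α := ℝ).2 hnumF)
  have hF0 : (0 : ℝ) < #F := by exact_mod_cast hnum.trans_le hnumF
  have hlogFG := Real.log_le_log (by positivity) hFG
  have hlogρ := mul_le_mul_of_nonneg_left ((Real.le_log_iff_exp_le hρ0).2 hρ)
    (by positivity : (0 : ℝ) ≤ m + 1)
  rw [Real.log_mul hF0.ne' (by positivity), Real.log_pow, Real.log_pow, Nat.cast_succ] at hlogFG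
  rw [div_mul_eq_mul_div, div_le_iff₀' (by positivity)]
  linarith

end ItineraryTree

section ObservableProcess

variable {ι : Type*} [DecidableEq ι]

/-- The time shift on finite sets of observables `(l, t)`, where `l` is a label and `t` a time. -/
def timeShift (ι : Type*) [DecidableEq ι] :
    SupBotHom (Finset (ι × ℕ)) (Finset (ι × ℕ)) where
  toFun A := A.image (Prod.map id Nat.succ)
  map_sup' := Finset.image_union
  map_bot' := Finset.image_empty _

theorem timeShift_iterate (i : ℕ) (A : Finset (ι × ℕ)) :
    (timeShift ι)^[i] A = A.image (Prod.map id (· + i)) := by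
  induction i with
  | zero => exact Finset.image_id.symm
  | succ i ih =>
    rw [Function.iterate_succ_apply', ih]
    exact Finset.image_image

theorem timeShift_iterate_singleton (i : ℕ) (l : ι) (t : ℕ) :
    (timeShift ι)^[i] {(l, t)} = {(l, t + i)} := by
  simp [timeShift_iterate]

theorem jointEntropy_timeShift_iterate_singleton_sup {Ω : Type*} [Fintype Ω]
    (S : ι × ℕ → Setoid Ω) (i : ℕ) (l : ι) (t : ℕ) (A : Finset (ι × ℕ)) :
    jointEntropy S ((timeShift ι)^[i] ({(l, t)} ⊔ A)) =
      uniformEntropy (S (l, t + i) ⊓ ((timeShift ι)^[i] A).inf S) := by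
  rw [iterate_sup, timeShift_iterate_singleton, jointEntropy, Finset.sup_eq_union,
    Finset.inf_union, Finset.inf_singleton]

theorem jointEntropy_timeShift_iterate_le {Ω : Type*} [Fintype Ω] {S : ι × ℕ → Setoid Ω}
    {C : ι → ℝ} (hC : ∀ l i, uniformEntropy (S (l, i)) ≤ C l) (A : Finset (ι × ℕ)) (i : ℕ) :
    jointEntropy S ((timeShift ι)^[i] A) ≤ ∑ p ∈ A, C p.1 := by
  have hsub := (isEntropyFunctional_jointEntropy fun p : ι × ℕ =>
    S (p.1, p.2 + i)).map_finset_sup_le A singleton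
  rw [Finset.sup_singleton_eq_self] at hsub
  rw [jointEntropy, timeShift_iterate, Finset.inf_image]
  refine hsub.trans (Finset.sum_le_sum fun p _ => ?_)
  rw [jointEntropy, Finset.inf_singleton]
  exact hC _ _

variable {Ω β γ : Type*} {α : ℕ → Type*}

/-- The labels of the observables of a process: its letter, a flag on the letter which the future
letters determine, and the names with respect to a sequence of partitions. -/
inductive Observable
  | letter
  | flag
  | name (j : ℕ)

/-- The partition of `Ω` by the value of the observable `l` at time `t`, indexed by `(l, t)`. -/
def observableSetoid (letter : Ω → ℕ → β) (flag : Ω → ℕ → γ) (name : ∀ j, Ω → ℕ → α j) :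
    Observable × ℕ → Setoid Ω
  | (.letter, t) => Setoid.ker (letter · t)
  | (.flag, t) => Setoid.ker (flag · t)
  | (.name j, t) => Setoid.ker (name j · t)

variable {letter : Ω → ℕ → β} {flag : Ω → ℕ → γ} {name : ∀ j, Ω → ℕ → α j}

theorem tailSetoid_le_inf_timeShift
    (hflag : ∀ a b i, (∀ j > i, letter a j = letter b j) → flag a i = flag b i) (i N : ℕ) :
    tailSetoid letter (i + 1) ≤ ((timeShift Observable)^[i] ({(.flag, 0)} ⊔
      window (timeShift Observable) ({(.letter, 0)} ⊔ {(.flag, 0)}) 1 N)).inf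
        (observableSetoid letter flag name) := by
  have hletter : ∀ t ≥ i + 1, tailSetoid letter (i + 1) ≤ Setoid.ker (letter · t) :=
    fun t ht a b h => tailSetoid_iff.1 h t ht
  have hflag : ∀ t ≥ i, tailSetoid letter (i + 1) ≤ Setoid.ker (flag · t) :=
    fun t ht a b h => hflag a b t fun j hj => tailSetoid_iff.1 h j (by omega)
  refine Finset.le_inf fun p hp => ?_
  rw [timeShift_iterate, Finset.mem_image] at hp
  simp only [window, iterate_sup, timeShift_iterate_singleton] at hp
  simp only [Finset.sup_eq_union, Finset.mem_union, Finset.mem_singleton, Finset.mem_sup,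
    Finset.mem_Ico] at hp
  obtain ⟨_, rfl | ⟨j, ⟨hj, -⟩, rfl | rfl⟩, rfl⟩ := hp
  · exact hflag (0 + i) (by omega)
  · exact hletter (0 + j + i) (by omega)
  · exact hflag (0 + j + i) (by omega)

theorem log_card_le_sum_condEntropy_letter [Fintype Ω] {m : ℕ}
    (hinj : Function.Injective letter) (hm : ∀ a b, ∀ i ≥ m, letter a i = letter b i)
    (hflag : ∀ a b i, (∀ j > i, letter a j = letter b j) → flag a i = flag b i) (N : ℕ) :
    Real.log (Fintype.card Ω) ≤ ∑ i ∈ Finset.range m,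
      condEntropy (fun A => jointEntropy (observableSetoid letter flag name)
        ((timeShift Observable)^[i] A)) {(.letter, 0)}
        ({(.flag, 0)} ⊔ window (timeShift Observable) ({(.letter, 0)} ⊔ {(.flag, 0)}) 1 N) := by
  refine (log_card_le_sum_uniformEntropy hinj hm fun i _ =>
    tailSetoid_le_inf_timeShift (name := name) hflag i N).trans_eq ?_
  refine Finset.sum_congr rfl fun i _ => ?_
  rw [condEntropy, jointEntropy_timeShift_iterate_singleton_sup, zero_add]
  rfl

theorem exists_delays_of_mul_le_log_card {Ω : ℕ → Type*} [∀ M, Fintype (Ω M)]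
    [Finite β] [Finite γ] [∀ j, Finite (α j)] {letter : ∀ M, Ω M → ℕ → β}
    {flag : ∀ M, Ω M → ℕ → γ} {c : ℝ} (hc : 0 < c)
    (hcard : ∀ M : ℕ, c * (M + 1) ≤ Real.log (Fintype.card (Ω M)))
    (hinj : ∀ M, Function.Injective (letter M))
    (hend : ∀ M a b, ∀ i ≥ M + 1, letter M a i = letter M b i)
    (hflag : ∀ M a b i, (∀ j > i, letter M a j = letter M b j) → flag M a i = flag M b i)
    (name : ∀ M j, Ω M → ℕ → α j) :
    ∃ n : ℕ → ℕ, ∀ k, ∃ M s, ∃ a b : Ω M, letter M a s ≠ letter M b s ∧ flag M a s = flag M b s ∧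
      ∀ j < k, ∀ i, n j ≤ i → i < n j + k → name M j a (i + s) = name M j b (i + s) := by
  have := Fintype.ofFinite β
  have := Fintype.ofFinite γ
  have := fun j => Fintype.ofFinite (α j)
  set σ := timeShift Observable
  set S := fun M => observableSetoid (letter M) (flag M) (name M)
  obtain ⟨h, hh, hlim⟩ := exists_isStationaryEntropy_tendsto_expect σ
    (g := fun M => jointEntropy (S M)) (fun M => isEntropyFunctional_jointEntropy (S M))
    fun A => ⟨_, fun M i => jointEntropy_timeShift_iterate_le (C := fun
      | .letter => Real.log (Fintype.card β)
      | .flag => Real.log (Fintype.card γ)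
      | .name j => Real.log (Fintype.card (α j)))
      (by rintro (_ | _ | _) i <;> exact uniformEntropy_ker_le_log_card _) A i⟩
  have huncertain : IsUncertainGiven σ h {(.letter, 0)} {(.flag, 0)} := by
    refine ⟨c, hc, fun N => ge_of_tendsto' ((hlim _).sub (hlim _)) fun M => ?_⟩
    rw [← Finset.expect_sub_distrib, Finset.expect_eq_sum_div_card, Finset.card_range,
      Nat.cast_succ, le_div_iff₀ (by positivity)]
    exact (hcard M).trans (log_card_le_sum_condEntropy_letter (hinj M) (hend M) (hflag M) N)
  obtain ⟨n, hn⟩ := huncertain.exists_delays_forall_lt_map_sup hh fun j => {(.name j, 0)}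
  refine ⟨n, fun k => ?_⟩
  obtain ⟨A, hA, hvA, hqA⟩ := hn k
  obtain ⟨M, hM⟩ := ((hlim A).eventually_lt (hlim _) hA).exists
  obtain ⟨s, -, hs⟩ := Finset.exists_lt_of_expect_lt_expect hM
  rw [jointEntropy_timeShift_iterate_singleton_sup, zero_add] at hs
  obtain ⟨a, b, hab, hletter⟩ := exists_rel_not_rel_of_uniformEntropy_lt hs
  have hrel {l : Observable} {i : ℕ} (hl : {(l, i)} ≤ A) : S M (l, i + s) a b := by
    refine Finset.inf_le (f := S M) ?_ hab
    rw [timeShift_iterate]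
    exact Finset.mem_image_of_mem (Prod.map id (· + s)) (Finset.singleton_subset_iff.1 hl)
  refine ⟨M, s, a, b, hletter, zero_add s ▸ hrel hvA, fun j hj i hji hik => ?_⟩
  have hname := hqA j hj i hji hik
  rw [timeShift_iterate_singleton, zero_add] at hname
  exact hrel hname

end ObservableProcess

theorem exists_delays_of_pos_coverEntropyOf {X : Type*} {T : X → X} {W : Fin 2 → Set X}
    (hW : Disjoint (W 0) (W 1)) (hpos : 0 < coverEntropyOf T fun b => (W b)ᶜ)
    {α : ℕ → Type*} [∀ j, Finite (α j)] (p : ∀ j, X → α j) :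
    ∃ n : ℕ → ℕ, ∀ k, ∃ x ∈ W 0, ∃ y ∈ W 1,
      ∀ j < k, ∀ i, n j ≤ i → i < n j + k → p j (T^[i] x) = p j (T^[i] y) := by
  obtain ⟨c, hc, hG⟩ := exists_itineraryTree_mul_le_log_card hW hpos
  choose G hG hcard using hG
  choose x _ hx using fun M (w : G M) => (hG M).realised w w.2
  obtain ⟨n, hn⟩ := exists_delays_of_mul_le_log_card hc
    (fun M => by simpa using hcard M) (fun M => Subtype.val_injective)
    (fun M w w' i hi => by rw [(hG M).eq_none w w.2 i hi, (hG M).eq_none w' w'.2 i hi])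
    (fun M w w' => (hG M).isSome_eq w w.2 w' w'.2) fun M j w i => p j (T^[i] (x M w))
  refine ⟨n, fun k => ?_⟩
  obtain ⟨M, s, w, w', hne, hsome, hname⟩ := hn k
  have hmem {w : G M} {b : Fin 2} (hw : w.1 s = some b) : T^[s] (x M w) ∈ W b := hx M w s b hw
  simp only [Function.iterate_add_apply] at hname
  match hw : w.1 s, hw' : w'.1 s with
  | none, none => exact absurd (hw.trans hw'.symm) hne
  | none, some _ | some _, none => simp [hw, hw'] at hsome
  | some 0, some 0 | some 1, some 1 => exact absurd (hw.trans hw'.symm) hne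
  | some 0, some 1 => exact ⟨_, hmem hw, _, hmem hw', hname⟩
  | some 1, some 0 =>
    exact ⟨_, hmem hw', _, hmem hw, fun j hj i hi hik => (hname j hj i hi hik).symm⟩

section AsymptoticPairs

variable {X : Type*} [PseudoMetricSpace X]

theorem exists_finite_partition_dist_lt [CompactSpace X] {ε : ℝ} (hε : 0 < ε) :
    ∃ (K : ℕ) (p : X → Fin K), ∀ x y, p x = p y → dist x y < ε := by
  obtain ⟨t, -, ht, hcover⟩ := finite_cover_balls_of_compact (isCompact_univ (X := X)) (half_pos hε)
  have := ht.to_subtype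
  have hball (x : X) : ∃ c : t, dist x c < ε / 2 := by simpa using hcover (mem_univ x)
  choose f hf using hball
  refine ⟨_, Finite.equivFin t ∘ f, fun x y hxy => ?_⟩
  have hfxy : f x = f y := (Finite.equivFin t).injective hxy
  calc
    dist x y ≤ dist x (f x) + dist y (f x) := dist_triangle_right _ _ _
    _ < ε / 2 + ε / 2 := add_lt_add (hf x) (hfxy ▸ hf y)
    _ = ε := add_halves ε

theorem exists_isAsymptoticPair_of_pos_coverEntropyOf [CompactSpace X] {T : X → X}
    (hT : Continuous T) {U V : Set X} (hU : IsClosed U) (hV : IsClosed V) (hUV : Disjoint U V)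
    (hpos : 0 < coverEntropyOf T ![Uᶜ, Vᶜ]) :
    ∃ x ∈ U, ∃ y ∈ V, IsAsymptoticPair T x y := by
  choose K p hp using fun j : ℕ =>
    exists_finite_partition_dist_lt (X := X) (Nat.one_div_pos_of_nat (α := ℝ) (n := j))
  have hcover : ![Uᶜ, Vᶜ] = fun b => (![U, V] b)ᶜ := by
    ext b : 1
    fin_cases b <;> rfl
  obtain ⟨n, hn⟩ := exists_delays_of_pos_coverEntropyOf (W := ![U, V]) hUV (hcover ▸ hpos) p
  choose x hx y hy hxy using hn
  obtain ⟨⟨x₀, y₀⟩, ⟨hx₀, hy₀⟩, φ, hφ, hlim⟩ := (hU.isCompact.prod hV.isCompact).tendsto_subseq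
    (x := fun k => (x k, y k)) fun k => ⟨hx k, hy k⟩
  refine ⟨x₀, hx₀, y₀, hy₀, ?_⟩
  have hdist : ∀ j i, n j ≤ i → dist (T^[i] x₀) (T^[i] y₀) ≤ 1 / ((j : ℝ) + 1) := by
    intro j i hi
    have hcont : Continuous fun z : X × X => dist (T^[i] z.1) (T^[i] z.2) :=
      ((hT.iterate i).comp continuous_fst).dist ((hT.iterate i).comp continuous_snd)
    refine le_of_tendsto ((hcont.tendsto _).comp hlim) ?_
    filter_upwards [eventually_gt_atTop i, eventually_gt_atTop j] with k hik hjk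
    have hk := hφ.id_le k
    exact (hp j _ _ (hxy (φ k) j (hjk.trans_le hk) i hi (by grind))).le
  refine Metric.tendsto_atTop.2 fun ε hε => ?_
  obtain ⟨j, hj⟩ := exists_nat_one_div_lt hε
  refine ⟨n j, fun i hi => ?_⟩
  rw [Real.dist_0_eq_abs, abs_of_nonneg dist_nonneg]
  exact (hdist j i hi).trans_lt hj

theorem entropyPairs_subset_closure_asymptoticPairs_general [CompactSpace X] {T : X → X}
    (hT : Continuous T) :
    {p : X × X | IsEntropyPair T p.1 p.2} ⊆ closure {p : X × X | IsAsymptoticPair T p.1 p.2} := by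
  rintro ⟨x, y⟩ ⟨-, hpair⟩
  refine Metric.mem_closure_iff.2 fun ε hε => ?_
  rcases (dist_nonneg (x := x) (y := y)).eq_or_lt with hxy | hxy
  · have hself : IsAsymptoticPair T x x := by simp [IsAsymptoticPair]
    exact ⟨(x, x), hself, by simpa [Prod.dist_eq, dist_comm y, ← hxy] using hε⟩
  obtain ⟨r, hr, hrε⟩ := exists_between (lt_min hε (half_pos hxy))
  have hdisj : Disjoint (Metric.closedBall x r) (Metric.closedBall y r) :=
    Metric.closedBall_disjoint_closedBall (by linarith [hrε.trans_le (min_le_right _ _)])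
  obtain ⟨x', hx', y', hy', hasym⟩ := exists_isAsymptoticPair_of_pos_coverEntropyOf hT
    Metric.isClosed_closedBall Metric.isClosed_closedBall hdisj <|
      hpair _ _ Metric.isClosed_closedBall Metric.isClosed_closedBall
        (Metric.closedBall_mem_nhds x hr) (Metric.closedBall_mem_nhds y hr) hdisj
  refine ⟨(x', y'), hasym, ?_⟩
  rw [dist_comm]
  exact (max_le hx' hy').trans_lt (hrε.trans_le (min_le_left _ _))

end AsymptoticPairs

/-- The closure of the set `A` of asymptotic pairs contains the set
`E(X,T)` of topological entropy pairs: asymptotic pairs are dense in the set of entropy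
pairs. -/
theorem entropyPairs_subset_closure_asymptoticPairs
    {X : Type*} [MetricSpace X] [CompactSpace X] (T : X ≃ₜ X) :
    {p : X × X | IsEntropyPair (⇑T) p.1 p.2} ⊆
      closure {p : X × X | IsAsymptoticPair (⇑T) p.1 p.2} :=
  entropyPairs_subset_closure_asymptoticPairs_general T.continuous
end
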